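/- arXiv:1707.08210 — 2 statements merged into one kernel-verified Lean document; each statement's English description precedes it below -/
import Mathlib

section
/- Let ε₁ = (√3·α₁/2)³, where α₁ is the smallest modulus of a zero of U₋ on the open ray arg z = π/3. For every ε > ε₁ the model operator T(ε) has at least one non-real eigenvalue, i.e. there exists λ ∈ ℂ with Im λ ≠ 0 and W(ε,λ) = 0. (After the first collision at ε = ε₁ the eigenvalues that leave the real axis never return to it.) -/
open Complex MeasureTheory Real

noncomputable section

/-- `w` is an entire solution of the Airy equation `w'' = z·w`
with prescribed (real) values of `w` and `w'` at the origin. -/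
def IsAiry (w : ℂ → ℂ) (w0 w0' : ℝ) : Prop :=
  Differentiable ℂ w ∧ Differentiable ℂ (deriv w) ∧
  (∀ z : ℂ, deriv (deriv w) z = z * w z) ∧
  w 0 = (w0 : ℂ) ∧ deriv w 0 = (w0' : ℂ)

/-- `Ai` is the standard Airy function of the first kind. -/
def IsAiryAi (Ai : ℂ → ℂ) : Prop :=
  IsAiry Ai ((3 : ℝ) ^ (-(2 : ℝ)/3) / Real.Gamma (2/3))
    (-((3 : ℝ) ^ (-(1 : ℝ)/3)) / Real.Gamma (1/3))

/-- `Bi` is the standard Airy function of the second kind. -/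
def IsAiryBi (Bi : ℂ → ℂ) : Prop :=
  IsAiry Bi ((3 : ℝ) ^ (-(1 : ℝ)/6) / Real.Gamma (2/3))
    ((3 : ℝ) ^ ((1 : ℝ)/6) / Real.Gamma (1/3))

/-- `U₋ = -√3·Ai + Bi`. -/
def Uminus (Ai Bi : ℂ → ℂ) : ℂ → ℂ := fun z => -(Real.sqrt 3 : ℂ) * Ai z + Bi z

/-- `U₊ = √3·Ai + Bi`. -/
def Uplus (Ai Bi : ℂ → ℂ) : ℂ → ℂ := fun z => (Real.sqrt 3 : ℂ) * Ai z + Bi z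

/-- The moduli of the zeros of `U` on the open ray `arg z = π/3`. -/
def rayZeroModuli (U : ℂ → ℂ) : Set ℝ :=
  {r : ℝ | 0 < r ∧ U ((r : ℂ) * Complex.exp ((π/3 : ℝ) * Complex.I)) = 0}

/-- The characteristic determinant `W(ε,λ)` of the model problem
`-ε⁻¹ y'' + i x y = λ y`, `y(-1) = y(1) = 0`. -/
def airyW (Ai Bi : ℂ → ℂ) (ε : ℝ) (lam : ℂ) : ℂ :=
  Ai ((ε ^ ((1:ℝ)/3) : ℝ) * (lam + Complex.I)) * Bi ((ε ^ ((1:ℝ)/3) : ℝ) * (lam - Complex.I))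
  - Ai ((ε ^ ((1:ℝ)/3) : ℝ) * (lam - Complex.I)) * Bi ((ε ^ ((1:ℝ)/3) : ℝ) * (lam + Complex.I))

/-- The polynomial `∏ (1 - t X)` over a list of reals. -/
def recipPoly (l : List ℝ) : Polynomial ℝ :=
  (l.map fun t => 1 - Polynomial.C t * Polynomial.X).prod

/-- The `k`-th power sum of a list of reals. -/
def powerSum (k : ℕ) (l : List ℝ) : ℝ := (l.map fun t => t ^ k).sum

lemma powerSum_cons (k : ℕ) (t : ℝ) (l : List ℝ) :
    powerSum k (t :: l) = t ^ k + powerSum k l := by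
  simp [powerSum]

lemma recipPoly_cons (t : ℝ) (l : List ℝ) :
    recipPoly (t :: l) = recipPoly l - Polynomial.C t * recipPoly l * Polynomial.X := by
  simp only [recipPoly, List.map_cons, List.prod_cons]
  ring

lemma coeff_recipPoly (l : List ℝ) :
    (recipPoly l).coeff 0 = 1 ∧ (recipPoly l).coeff 1 = -powerSum 1 l ∧
    2 * (recipPoly l).coeff 2 = powerSum 1 l ^ 2 - powerSum 2 l ∧
    6 * (recipPoly l).coeff 3 =
      -(powerSum 1 l ^ 3 - 3 * powerSum 1 l * powerSum 2 l + 2 * powerSum 3 l) := by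
  induction l with
  | nil => simp [recipPoly, powerSum, Polynomial.coeff_one]
  | cons t l ih =>
    obtain ⟨h0, h1, h2, h3⟩ := ih
    simp only [recipPoly_cons, powerSum_cons, Polynomial.coeff_sub, Polynomial.coeff_mul_X_zero]
    have e1 : ∀ q : Polynomial ℝ, (q * Polynomial.X).coeff 1 = q.coeff 0 :=
      fun q => Polynomial.coeff_mul_X q 0
    have e2 : ∀ q : Polynomial ℝ, (q * Polynomial.X).coeff 2 = q.coeff 1 :=
      fun q => Polynomial.coeff_mul_X q 1
    have e3 : ∀ q : Polynomial ℝ, (q * Polynomial.X).coeff 3 = q.coeff 2 :=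
      fun q => Polynomial.coeff_mul_X q 2
    simp only [e1, e2, e3, Polynomial.coeff_C_mul, h0, h1]
    refine ⟨by ring, by ring, ?_, ?_⟩
    · linear_combination h2
    · linear_combination h3 - 3 * t * h2

lemma powerSum_two_nonneg (l : List ℝ) : 0 ≤ powerSum 2 l :=
  List.sum_nonneg (by simp only [List.mem_map]; rintro _ ⟨t, -, rfl⟩; positivity)

lemma sq_le_powerSum_two {l : List ℝ} {t : ℝ} (h : t ∈ l) : t ^ 2 ≤ powerSum 2 l := by
  induction l with
  | nil => simp at h
  | cons a l ih =>
    rw [powerSum_cons]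
    rcases List.mem_cons.1 h with rfl | h
    · linarith [powerSum_two_nonneg l]
    · nlinarith [ih h, sq_nonneg a]

lemma powerSum_inequality (l : List ℝ) :
    0 ≤ powerSum 1 l ^ 2 * powerSum 2 l + powerSum 2 l ^ 2
      - 2 * powerSum 1 l * powerSum 3 l := by
  have key : ∀ (A B : ℝ) (l : List ℝ), (∀ t ∈ l, t ^ 2 ≤ B) →
      0 ≤ A ^ 2 * powerSum 2 l + B * powerSum 2 l - 2 * A * powerSum 3 l := by
    intro A B l hl
    induction l with
    | nil => simp [powerSum]
    | cons a l ih =>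
      have h1 := ih fun t ht => hl t (List.mem_cons_of_mem _ ht)
      have h2 := hl a List.mem_cons_self
      simp only [powerSum_cons]
      have : 0 ≤ a ^ 2 * ((A - a) ^ 2 + (B - a ^ 2)) :=
        mul_nonneg (sq_nonneg _) (add_nonneg (sq_nonneg _) (sub_nonneg.2 h2))
      nlinarith
  have := key (powerSum 1 l) (powerSum 2 l) l fun t ht => sq_le_powerSum_two ht
  linarith [sq (powerSum 2 l)]

/-- The function `z ↦ ∏ (1 - t z)` on `ℂ`. -/
def recipFun (l : List ℝ) (z : ℂ) : ℂ := ((recipPoly l).map (algebraMap ℝ ℂ)).eval z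

lemma recipFun_cons (t : ℝ) (l : List ℝ) (z : ℂ) :
    recipFun (t :: l) z = (1 - t * z) * recipFun l z := by
  simp [recipFun, recipPoly_cons]; ring

lemma differentiable_recipFun (l : List ℝ) : Differentiable ℂ (recipFun l) :=
  Polynomial.differentiable _

lemma recipFun_zero (l : List ℝ) : recipFun l 0 = 1 := by
  have := (coeff_recipPoly l).1
  rw [recipFun, ← Polynomial.coeff_zero_eq_eval_zero]
  simp [this]

lemma deriv_recipFun_jet (l : List ℝ) : ∃ q₁ q₂ q₃ : ℝ,
    deriv (recipFun l) 0 = q₁ ∧ deriv (deriv (recipFun l)) 0 = q₂ ∧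
    deriv (deriv (deriv (recipFun l))) 0 = q₃ ∧ q₂ ≤ q₁ ^ 2 ∧ q₁ * q₃ ≤ q₂ ^ 2 := by
  have hd : ∀ p : Polynomial ℂ, deriv (fun z => p.eval z) = fun z => p.derivative.eval z :=
    fun p => funext fun z => p.deriv
  obtain ⟨h0, h1, h2, h3⟩ := coeff_recipPoly l
  refine ⟨(recipPoly l).coeff 1, 2 * (recipPoly l).coeff 2, 6 * (recipPoly l).coeff 3,
    ?_, ?_, ?_, ?_, ?_⟩
  · unfold recipFun
    rw [Polynomial.deriv, ← Polynomial.coeff_zero_eq_eval_zero]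
    simp [Polynomial.coeff_derivative]
  · unfold recipFun
    simp only [hd]
    rw [← Polynomial.coeff_zero_eq_eval_zero]
    simp [Polynomial.coeff_derivative]
    ring
  · unfold recipFun
    simp only [hd]
    rw [← Polynomial.coeff_zero_eq_eval_zero]
    simp [Polynomial.coeff_derivative]
    ring
  · rw [h1, h2]; linarith [powerSum_two_nonneg l, neg_sq (powerSum 1 l)]
  · rw [h1, h2, h3]; linarith [powerSum_inequality l]

lemma pow_le_norm_recipFun {l : List ℝ} {N c : ℝ} (hl : ∀ t ∈ l, 1 ≤ N * |t|) (hc : 0 ≤ c)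
    {z : ℂ} (hz : ‖z‖ = (c + 1) * N) : c ^ l.length ≤ ‖recipFun l z‖ := by
  induction l with
  | nil => simp [recipFun, recipPoly]
  | cons t l ih =>
    have h1 := ih fun t ht => hl t (List.mem_cons_of_mem _ ht)
    have h2 := hl t List.mem_cons_self
    rw [recipFun_cons, List.length_cons, pow_succ', norm_mul]
    refine mul_le_mul ?_ h1 (by positivity) (norm_nonneg _)
    have h3 : ‖(t : ℂ) * z‖ - ‖(1 : ℂ)‖ ≤ ‖1 - (t : ℂ) * z‖ := by
      rw [norm_sub_rev]; exact norm_sub_norm_le _ _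
    have h4 : ‖(t : ℂ) * z‖ = |t| * ((c + 1) * N) := by
      rw [norm_mul, hz, Complex.norm_real, Real.norm_eq_abs]
    rw [h4, norm_one] at h3
    nlinarith

lemma norm_le_of_norm_le_sphere {h : ℂ → ℂ} (hh : Differentiable ℂ h) {r B : ℝ} (hr : 0 < r)
    (hB : ∀ z, ‖z‖ = r → ‖h z‖ ≤ B) {z : ℂ} (hz : ‖z‖ ≤ r) : ‖h z‖ ≤ B := by
  refine Complex.norm_le_of_forall_mem_frontier_norm_le (U := Metric.ball 0 r)
    Metric.isBounded_ball hh.diffContOnCl (fun w hw => hB w ?_) ?_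
  · rw [frontier_ball _ hr.ne'] at hw
    simpa using hw
  · rw [closure_ball _ hr.ne']
    simpa using hz

/-- The real zeros of an entire function in a disk can be divided out. -/
lemma exists_zero_free_quotient {R : ℂ → ℂ} (hR : Differentiable ℂ R) (h0 : R 0 = 1)
    (hreal : ∀ z, R z = 0 → z.im = 0) {N : ℝ} (hN : 0 < N) :
    ∃ (l : List ℝ) (h : ℂ → ℂ), (∀ t ∈ l, 1 ≤ N * |t|) ∧ Differentiable ℂ h ∧
      (∀ z, R z = recipFun l z * h z) ∧ ∀ z, ‖z‖ ≤ N → h z ≠ 0 := by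
  let S : Set ℕ := {n | ∃ (l : List ℝ) (h : ℂ → ℂ), l.length = n ∧ (∀ t ∈ l, 1 ≤ N * |t|) ∧
    Differentiable ℂ h ∧ ∀ z, R z = recipFun l z * h z}
  have hS0 : S.Nonempty := ⟨0, [], R, rfl, by simp, hR, by simp [recipFun, recipPoly]⟩
  obtain ⟨B, hB⟩ := (isCompact_closedBall (0 : ℂ) (4 * N)).exists_bound_of_continuousOn
    hR.continuous.continuousOn
  have hSb : BddAbove S := by
    refine ⟨⌈B⌉₊, ?_⟩
    rintro n ⟨l, h, rfl, hl, hh, hRh⟩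
    have hb : ‖h 0‖ ≤ B / 3 ^ l.length := by
      refine norm_le_of_norm_le_sphere hh (r := 4 * N) (by positivity) (fun z hz => ?_)
        (by simp [hN.le])
      have h1 := hB z (by simp [hz])
      have h2 := pow_le_norm_recipFun hl (c := 3) (by norm_num) (z := z) (by rw [hz]; ring)
      rw [hRh z, norm_mul] at h1
      rw [le_div_iff₀ (by positivity), mul_comm]
      exact (mul_le_mul_of_nonneg_right h2 (norm_nonneg _)).trans h1
    have h1 : h 0 = 1 := by
      have := hRh 0
      rw [h0, recipFun_zero, one_mul] at this
      exact this.symm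
    rw [h1, norm_one, le_div_iff₀ (by positivity), one_mul] at hb
    have h2 : (l.length : ℝ) ≤ 3 ^ l.length := by
      exact_mod_cast (Nat.lt_pow_self (by norm_num : 1 < 3)).le
    exact_mod_cast (h2.trans hb).trans (Nat.le_ceil B)
  obtain ⟨l, h, hlen, hl, hh, hRh⟩ := Nat.sSup_mem hS0 hSb
  refine ⟨l, h, hl, hh, hRh, fun z hz hz0 => ?_⟩
  have hRz : R z = 0 := by rw [hRh, hz0, mul_zero]
  obtain ⟨x, rfl⟩ : ∃ x : ℝ, (x : ℂ) = z := ⟨z.re, by simp [Complex.ext_iff, hreal z hRz]⟩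
  have hx : x ≠ 0 := by
    rintro rfl
    simp [h0] at hRz
  have hxc : (x : ℂ) ≠ 0 := by exact_mod_cast hx
  have hmem : sSup S + 1 ∈ S := by
    refine ⟨x⁻¹ :: l, fun z => -x * dslope h x z, by simp [hlen], ?_, ?_, ?_⟩
    · intro t ht
      rcases List.mem_cons.1 ht with rfl | ht
      · rw [Complex.norm_real, Real.norm_eq_abs] at hz
        rw [abs_inv, ← div_eq_mul_inv, le_div_iff₀ (abs_pos.2 hx), one_mul]
        exact hz
      · exact hl t ht
    · have : Differentiable ℂ (dslope h x) := by
        rw [← differentiableOn_univ, Complex.differentiableOn_dslope Filter.univ_mem]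
        exact hh.differentiableOn
      fun_prop
    · intro z
      have h1 := sub_smul_dslope h (x : ℂ) z
      rw [hz0, sub_zero, smul_eq_mul] at h1
      rw [hRh z, recipFun_cons, ← h1]
      push_cast
      field_simp
      ring
  have := le_csSup hSb hmem
  omega

/-- A zero-free function on a disk, bounded by `exp M` and equal to `1` at the centre, is close
to `1` near the centre. -/
lemma exists_log_bound {h : ℂ → ℂ} (hh : Differentiable ℂ h) (h0 : h 0 = 1) {N M : ℝ}
    (hN : 0 < N) (hM : 0 < M) (hne : ∀ z, ‖z‖ < N → h z ≠ 0)
    (hb : ∀ z, ‖z‖ < N → ‖h z‖ ≤ Real.exp M) {z : ℂ} (hz : ‖z‖ < N) :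
    ∃ g : ℂ, h z = Complex.exp g ∧ ‖g‖ ≤ 2 * M * ‖z‖ / (N - ‖z‖) := by
  have hball : ∀ {w : ℂ}, w ∈ Metric.ball (0 : ℂ) N ↔ ‖w‖ < N := by simp
  have hd : DifferentiableOn ℂ (fun w => deriv h w / h w) (Metric.ball 0 N) := by
    refine DifferentiableOn.div ?_ hh.differentiableOn fun w hw => hne w (hball.1 hw)
    exact hh.contDiff.differentiable_deriv_two.differentiableOn
  obtain ⟨g, hg0, hg⟩ := hd.isExactOn_ball.with_val_at 0 0
  have hgd : DifferentiableOn ℂ g (Metric.ball 0 N) :=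
    fun w hw => (hg w hw).differentiableAt.differentiableWithinAt
  have hexp : ∀ w ∈ Metric.ball (0 : ℂ) N, h w = Complex.exp (g w) := by
    intro w hw
    have hconst : ∀ w ∈ Metric.ball (0 : ℂ) N,
        HasDerivAt (fun w => h w * Complex.exp (-g w)) 0 w := by
      intro w hw
      have h1 := (hh w).hasDerivAt.mul (hg w hw).neg.cexp
      refine h1.congr_deriv ?_
      have := hne w (hball.1 hw)
      simp only [Pi.neg_apply]
      field_simp
      ring
    have := (convex_ball (0 : ℂ) N).is_const_of_fderivWithin_eq_zero (𝕜 := ℂ)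
      (f := fun w => h w * Complex.exp (-g w))
      (fun w hw => (hconst w hw).differentiableAt.differentiableWithinAt)
      (fun w hw => by
        have := (hconst w hw).hasFDerivAt.hasFDerivWithinAt (s := Metric.ball (0 : ℂ) N)
        rw [this.fderivWithin (Metric.isOpen_ball.uniqueDiffWithinAt hw)]
        ext; simp) hw (Metric.mem_ball_self hN)
    simp only [hg0, h0, neg_zero, Complex.exp_zero, mul_one] at this
    rw [Complex.exp_neg] at this
    field_simp at this
    exact this
  refine ⟨g z, hexp z (hball.2 hz), ?_⟩
  refine Complex.borelCaratheodory_zero hM hgd ?_ hN (hball.2 hz) hg0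
  intro w hw
  have h1 := hb w (hball.1 hw)
  rw [hexp w hw, Complex.norm_exp] at h1
  exact Real.exp_le_exp.1 h1

open Filter Topology in
/-- An entire function of order at most `1/2` with only real zeros is a locally uniform limit of
real-rooted polynomials. -/
lemma exists_tendsto_recipFun {R : ℂ → ℂ} (hR : Differentiable ℂ R) (h0 : R 0 = 1)
    (hreal : ∀ z, R z = 0 → z.im = 0) {C : ℝ} (hC : 0 < C)
    (hgrow : ∀ z, ‖R z‖ ≤ Real.exp (C * (1 + √‖z‖))) :
    ∃ l : ℕ → List ℝ,
      TendstoLocallyUniformlyOn (fun n => recipFun (l n)) R atTop (Metric.ball 0 1) := by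
  have key : ∀ n : ℕ, ∃ l : List ℝ, ∀ z, ‖z‖ < 1 → ∃ g : ℂ, R z = recipFun l z * Complex.exp g ∧
      ‖g‖ ≤ 2 * (C * (1 + √(2 * (n + 2)))) / (n + 1) := by
    intro n
    have hN : (0 : ℝ) < n + 2 := by positivity
    obtain ⟨l, h, hl, hh, hRh, hne⟩ := exists_zero_free_quotient hR h0 hreal hN
    have hh0 : h 0 = 1 := by
      have := hRh 0
      rw [h0, recipFun_zero, one_mul] at this
      exact this.symm
    set M := C * (1 + √(2 * (n + 2))) with hMdef
    have hM : 0 < M := by positivity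
    have hb : ∀ z, ‖z‖ ≤ 2 * ((n : ℝ) + 2) → ‖h z‖ ≤ Real.exp M := by
      intro z hz
      refine norm_le_of_norm_le_sphere hh (by positivity) (fun z hz => ?_) hz
      have h1 := hgrow z
      have h2 := pow_le_norm_recipFun hl (c := 1) (by norm_num) (z := z) (by rw [hz]; ring)
      rw [hRh z, norm_mul, hz] at h1
      rw [one_pow] at h2
      exact (le_mul_of_one_le_left (norm_nonneg _) h2).trans h1
    refine ⟨l, fun z hz => ?_⟩
    obtain ⟨g, hg, hgb⟩ := exists_log_bound hh hh0 hN hM (fun z hz => hne z hz.le)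
      (fun z hz => hb z (by linarith)) (z := z) (by linarith)
    refine ⟨g, by rw [hRh, hg], hgb.trans ?_⟩
    have := norm_nonneg z
    refine div_le_div₀ (by positivity) ?_ (by positivity) (by linarith)
    nlinarith
  choose l hl using key
  refine ⟨l, TendstoUniformlyOn.tendstoLocallyUniformlyOn ?_⟩
  have hlim : Tendsto (fun n : ℕ => 2 * (C * (1 + √(2 * ((n : ℝ) + 2)))) / (n + 1)) atTop (𝓝 0) := by
    have h1 : Tendsto (fun n : ℕ => 6 * C * (√((n : ℝ) + 1))⁻¹) atTop (𝓝 (6 * C * 0)) :=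
      (tendsto_inv_atTop_zero.comp (Real.tendsto_sqrt_atTop.comp
        (tendsto_atTop_add_const_right _ 1 tendsto_natCast_atTop_atTop))).const_mul _
    rw [mul_zero] at h1
    refine squeeze_zero (fun n => by positivity) (fun n => ?_) h1
    have hn : (0 : ℝ) ≤ n := n.cast_nonneg
    have hs : √((n : ℝ) + 1) ^ 2 = n + 1 := Real.sq_sqrt (by positivity)
    have hs1 : 1 ≤ √((n : ℝ) + 1) := Real.one_le_sqrt.2 (by linarith)
    have hs2 : √(2 * ((n : ℝ) + 2)) ≤ 2 * √((n : ℝ) + 1) :=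
      Real.sqrt_le_iff.2 ⟨by positivity, by rw [mul_pow, hs]; linarith⟩
    rw [div_le_iff₀ (by positivity)]
    have h2 : 6 * C * (√((n : ℝ) + 1))⁻¹ * √((n : ℝ) + 1) ^ 2 = 6 * C * √((n : ℝ) + 1) := by
      field_simp
    rw [hs] at h2
    rw [h2]
    nlinarith
  obtain ⟨B, hB⟩ := (isCompact_closedBall (0 : ℂ) 1).exists_bound_of_continuousOn
    hR.continuous.continuousOn
  have hB0 : 0 ≤ B := (norm_nonneg _).trans (hB 0 (by simp))
  rw [Metric.tendstoUniformlyOn_iff]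
  intro ε hε
  have h1 : ∀ᶠ n : ℕ in atTop, 2 * (C * (1 + √(2 * ((n : ℝ) + 2)))) / (n + 1) < 1 :=
    hlim.eventually_lt_const one_pos
  have h2 : ∀ᶠ n : ℕ in atTop, 2 * (C * (1 + √(2 * ((n : ℝ) + 2)))) / (n + 1)
      < ε / (2 * (B + 1)) := hlim.eventually_lt_const (by positivity)
  filter_upwards [h1, h2] with n hn1 hn2 z hz
  have hz1 : ‖z‖ < 1 := by simpa using hz
  obtain ⟨g, hg, hgb⟩ := hl n z hz1
  have h3 : recipFun (l n) z = R z * Complex.exp (-g) := by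
    rw [hg, mul_assoc, ← Complex.exp_add]; simp
  have h4 : ‖Complex.exp (-g) - 1‖ ≤ 2 * ‖-g‖ :=
    Complex.norm_exp_sub_one_le (by rw [norm_neg]; linarith)
  rw [dist_comm, dist_eq_norm, h3]
  have h5 : R z * Complex.exp (-g) - R z = R z * (Complex.exp (-g) - 1) := by ring
  rw [h5, norm_mul]
  have h6 := hB z (by simpa using hz1.le)
  rw [norm_neg] at h4
  calc ‖R z‖ * ‖Complex.exp (-g) - 1‖ ≤ B * (2 * ‖g‖) := by gcongr
    _ ≤ (B + 1) * (2 * ‖g‖) := by gcongr; linarith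
    _ < (B + 1) * (2 * (ε / (2 * (B + 1)))) := by gcongr; linarith
    _ = ε := by field_simp

open Filter Topology in
/-- Laguerre-type inequalities for an entire function of order at most `1/2` with only real
zeros. -/
lemma laguerre_inequalities {R : ℂ → ℂ} (hR : Differentiable ℂ R) (h0 : R 0 = 1)
    (hreal : ∀ z, R z = 0 → z.im = 0) {C : ℝ} (hC : 0 < C)
    (hgrow : ∀ z, ‖R z‖ ≤ Real.exp (C * (1 + √‖z‖))) :
    ∃ r₁ r₂ r₃ : ℝ, deriv R 0 = r₁ ∧ deriv (deriv R) 0 = r₂ ∧ deriv (deriv (deriv R)) 0 = r₃ ∧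
      r₂ ≤ r₁ ^ 2 ∧ r₁ * r₃ ≤ r₂ ^ 2 := by
  obtain ⟨l, hl⟩ := exists_tendsto_recipFun hR h0 hreal hC hgrow
  choose q₁ q₂ q₃ hq₁ hq₂ hq₃ hle₂ hle₃ using fun n => deriv_recipFun_jet (l n)
  have hdd : ∀ f : ℂ → ℂ, Differentiable ℂ f → Differentiable ℂ (deriv f) :=
    fun f hf => hf.contDiff.differentiable_deriv_two
  have hP := fun n => differentiable_recipFun (l n)
  have t1 := hl.deriv (.of_forall fun n => (hP n).differentiableOn) Metric.isOpen_ball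
  have t2 := t1.deriv (.of_forall fun n => (hdd _ (hP n)).differentiableOn) Metric.isOpen_ball
  have t3 := t2.deriv (.of_forall fun n => (hdd _ (hdd _ (hP n))).differentiableOn)
    Metric.isOpen_ball
  have m0 : (0 : ℂ) ∈ Metric.ball (0 : ℂ) 1 := by simp
  have c1 := t1.tendsto_at m0
  have c2 := t2.tendsto_at m0
  have c3 := t3.tendsto_at m0
  simp only [Function.comp_apply, hq₁, hq₂, hq₃] at c1 c2 c3
  have toReal : ∀ {q : ℕ → ℝ} {r : ℂ}, Tendsto (fun n => (q n : ℂ)) atTop (𝓝 r) →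
      Tendsto q atTop (𝓝 r.re) ∧ r = r.re := fun {q r} h => by
    have h' : Tendsto q atTop (𝓝 r.re) := (Complex.continuous_re.tendsto _).comp h
    exact ⟨h', tendsto_nhds_unique h ((Complex.continuous_ofReal.tendsto _).comp h')⟩
  obtain ⟨d1, e1⟩ := toReal c1
  obtain ⟨d2, e2⟩ := toReal c2
  obtain ⟨d3, e3⟩ := toReal c3
  exact ⟨_, _, _, e1, e2, e3, le_of_tendsto_of_tendsto' d2 (d1.pow 2) hle₂,
    le_of_tendsto_of_tendsto' (d1.mul d3) (d2.pow 2) hle₃⟩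

/-- Laguerre-type inequalities, without normalisation at the origin. -/
lemma laguerre_inequalities_scaled {R : ℂ → ℂ} (hR : Differentiable ℂ R) (h0 : R 0 ≠ 0)
    (hreal : ∀ z, R z = 0 → z.im = 0) {C : ℝ} (hC : 0 < C)
    (hgrow : ∀ z, ‖R z‖ ≤ Real.exp (C * (1 + √‖z‖))) :
    ∃ r₁ r₂ r₃ : ℝ, iteratedDeriv 1 R 0 = r₁ * R 0 ∧ iteratedDeriv 2 R 0 = r₂ * R 0 ∧
      iteratedDeriv 3 R 0 = r₃ * R 0 ∧ r₂ ≤ r₁ ^ 2 ∧ r₁ * r₃ ≤ r₂ ^ 2 := by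
  set c := R 0 with hc
  have hS : Differentiable ℂ (fun z => c⁻¹ * R z) := hR.const_mul _
  have hn : 0 < ‖c⁻¹‖ := norm_pos_iff.2 (inv_ne_zero h0)
  obtain ⟨r₁, r₂, r₃, h₁, h₂, h₃, hle⟩ := laguerre_inequalities hS
    (by simp only [← hc]; exact inv_mul_cancel₀ h0)
    (fun z hz => hreal z ((mul_eq_zero.1 hz).resolve_left (inv_ne_zero h0)))
    (C := C + |Real.log ‖c⁻¹‖|) (by positivity) (fun z => by
      rw [norm_mul]
      calc ‖c⁻¹‖ * ‖R z‖ ≤ Real.exp (Real.log ‖c⁻¹‖) * Real.exp (C * (1 + √‖z‖)) := by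
            rw [Real.exp_log hn]; exact mul_le_mul_of_nonneg_left (hgrow z) hn.le
        _ = Real.exp (Real.log ‖c⁻¹‖ + C * (1 + √‖z‖)) := (Real.exp_add _ _).symm
        _ ≤ _ := by
            refine Real.exp_le_exp.2 ?_
            have h1 := le_abs_self (Real.log ‖c⁻¹‖)
            have h2 := abs_nonneg (Real.log ‖c⁻¹‖)
            have h3 := Real.sqrt_nonneg ‖z‖
            nlinarith [mul_nonneg h2 h3])
  have e1 : deriv (fun z => c⁻¹ * R z) = fun z => c⁻¹ * deriv R z := by
    funext z; exact deriv_const_mul_field _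
  have e2 : deriv (fun z => c⁻¹ * deriv R z) = fun z => c⁻¹ * deriv (deriv R) z := by
    funext z; exact deriv_const_mul_field _
  have e3 : deriv (fun z => c⁻¹ * deriv (deriv R) z) = fun z => c⁻¹ * deriv (deriv (deriv R)) z := by
    funext z; exact deriv_const_mul_field _
  rw [e1] at h₁
  rw [e1, e2] at h₂
  rw [e1, e2, e3] at h₃
  refine ⟨r₁, r₂, r₃, ?_, ?_, ?_, hle⟩
  · simp only [iteratedDeriv_one]; rw [← h₁]; field_simp
  · simp only [iteratedDeriv_succ, iteratedDeriv_zero]; rw [← h₂]; field_simp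
  · simp only [iteratedDeriv_succ, iteratedDeriv_zero]; rw [← h₃]; field_simp

/-- Dividing an entire function by `z` at a zero at the origin. -/
lemma exists_div_self {F : ℂ → ℂ} (hF : Differentiable ℂ F) (h0 : F 0 = 0) {C : ℝ} (hC : 0 < C)
    (hgrow : ∀ z, ‖F z‖ ≤ Real.exp (C * (1 + √‖z‖))) :
    ∃ G : ℂ → ℂ, Differentiable ℂ G ∧ (∀ z, F z = z * G z) ∧
      (∀ z, ‖G z‖ ≤ Real.exp (2 * C * (1 + √‖z‖))) ∧
      ∀ k : ℕ, iteratedDeriv (k + 1) F 0 = (k + 1) * iteratedDeriv k G 0 := by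
  have hG : Differentiable ℂ (dslope F 0) := by
    rw [← differentiableOn_univ, Complex.differentiableOn_dslope Filter.univ_mem]
    exact hF.differentiableOn
  have hFG : ∀ z, F z = z * dslope F 0 z := fun z => by
    have := sub_smul_dslope F 0 z
    simpa [h0] using this.symm
  refine ⟨dslope F 0, hG, hFG, fun z => ?_, fun k => ?_⟩
  · have key : ∀ w, 1 ≤ ‖w‖ → ‖dslope F 0 w‖ ≤ Real.exp (C * (1 + √‖w‖)) := fun w hw => by
      have h1 := hgrow w
      rw [hFG, norm_mul] at h1
      exact (le_mul_of_one_le_left (norm_nonneg _) hw).trans h1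
    have hs := Real.sqrt_nonneg ‖z‖
    rcases le_total 1 ‖z‖ with hz | hz
    · refine (key z hz).trans (Real.exp_le_exp.2 ?_)
      nlinarith [mul_nonneg hC.le hs]
    · refine norm_le_of_norm_le_sphere hG one_pos (fun w hw => (key w hw.ge).trans ?_) hz
      rw [hw, Real.sqrt_one]
      refine Real.exp_le_exp.2 ?_
      nlinarith [mul_nonneg hC.le hs]
  · set G := dslope F 0
    have hGd : ∀ n : ℕ, Differentiable ℂ (iteratedDeriv n G) := fun n =>
      hG.contDiff.differentiable_iteratedDeriv n (WithTop.coe_lt_top _)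
    have hk : ∀ k : ℕ, iteratedDeriv (k + 1) F =
        fun z => z * iteratedDeriv (k + 1) G z + (k + 1) * iteratedDeriv k G z := by
      intro k
      induction k with
      | zero =>
        funext z
        rw [iteratedDeriv_one, iteratedDeriv_one, iteratedDeriv_zero, funext hFG]
        have := (hasDerivAt_id z).mul (hG z).hasDerivAt
        refine this.deriv.trans ?_
        simp; ring
      | succ k ih =>
        funext z
        rw [iteratedDeriv_succ, ih]
        have h1 := ((hasDerivAt_id z).mul (hGd (k + 1) z).hasDerivAt).add
          ((hGd k z).hasDerivAt.const_mul ((k : ℂ) + 1))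
        refine h1.deriv.trans ?_
        rw [← iteratedDeriv_succ, ← iteratedDeriv_succ]
        push_cast
        simp; ring
    rw [hk]
    simp

/-- At a multiple real zero of a solution with only real zeros of the system
`f''' = 2 f + 4 z f' - 2 s m`, `m' = -2 s f`, the second derivative has the sign of `m`. -/
lemma double_zero_sign {f m : ℂ → ℂ} {s μ k m₀ : ℝ} (hμ : 0 < μ)
    (hf : Differentiable ℂ f)
    (h3 : ∀ z, iteratedDeriv 3 f z = 2 * f z + 4 * z * deriv f z - 2 * s * m z)
    (hm : ∀ z, HasDerivAt m (-2 * s * f z) z)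
    (hreal : ∀ z, f z = 0 → z.im = 0) {C : ℝ} (hC : 0 < C)
    (hgrow : ∀ z, ‖f z‖ ≤ Real.exp (C * (1 + √‖z‖)))
    (hs : 0 < s) (hz0 : f μ = 0) (hz1 : deriv f μ = 0) (hk : iteratedDeriv 2 f μ = k)
    (hm₀ : m μ = m₀) (hne : m₀ ≠ 0) : 0 < k * m₀ := by
  have hfd : ∀ n : ℕ, Differentiable ℂ (iteratedDeriv n f) := fun n =>
    hf.contDiff.differentiable_iteratedDeriv n (WithTop.coe_lt_top _)
  have hd : ∀ n z, HasDerivAt (iteratedDeriv n f) (iteratedDeriv (n + 1) f z) z := fun n z => by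
    rw [iteratedDeriv_succ]; exact (hfd n z).hasDerivAt
  have hd0 : ∀ z, HasDerivAt f (iteratedDeriv 1 f z) z := fun z => by simpa using hd 0 z
  have h4 : ∀ z, iteratedDeriv 4 f z =
      6 * iteratedDeriv 1 f z + 4 * z * iteratedDeriv 2 f z + 4 * s ^ 2 * f z := by
    intro z
    rw [iteratedDeriv_succ, show iteratedDeriv 3 f = fun z => 2 * f z + 4 * z * iteratedDeriv 1 f z
      - 2 * s * m z by funext z; rw [h3, iteratedDeriv_one]]
    have := (((hd0 z).const_mul 2).add
      (((hasDerivAt_id z).const_mul 4).mul (hd 1 z))).sub ((hm z).const_mul (2 * (s : ℂ)))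
    refine this.deriv.trans ?_
    simp; ring
  have h5 : ∀ z, iteratedDeriv 5 f z =
      10 * iteratedDeriv 2 f z + 4 * z * iteratedDeriv 3 f z
        + 4 * s ^ 2 * iteratedDeriv 1 f z := by
    intro z
    rw [iteratedDeriv_succ, funext h4]
    have := ((((hd 1 z).const_mul 6).add
      (((hasDerivAt_id z).const_mul 4).mul (hd 2 z)))).add ((hd0 z).const_mul (4 * (s : ℂ) ^ 2))
    refine this.deriv.trans ?_
    simp; ring
  rw [← iteratedDeriv_one] at hz1
  have v3 := h3 μ
  have v4 := h4 μ
  have v5 := h5 μ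
  rw [← iteratedDeriv_one] at v3
  rw [hz0, hz1, hm₀] at v3
  rw [hz0, hz1, hk] at v4
  rw [hz1, hk, v3] at v5
  set F : ℂ → ℂ := fun z => f (z + μ) with hFdef
  have hF : Differentiable ℂ F := by fun_prop
  have hFj : ∀ n, iteratedDeriv n F 0 = iteratedDeriv n f μ := fun n => by
    rw [hFdef, iteratedDeriv_comp_add_const]; simp
  have hFgrow : ∀ z, ‖F z‖ ≤ Real.exp (C * (1 + √μ) * (1 + √‖z‖)) := fun z => by
    refine (hgrow _).trans (Real.exp_le_exp.2 ?_)
    have h1 : √‖z + μ‖ ≤ √‖z‖ + √μ := by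
      refine Real.sqrt_le_iff.2 ⟨by positivity, ?_⟩
      have h2 := norm_add_le z μ
      rw [Complex.norm_real, Real.norm_eq_abs, abs_of_pos hμ] at h2
      nlinarith [Real.sq_sqrt (norm_nonneg z), Real.sq_sqrt hμ.le, Real.sqrt_nonneg ‖z‖,
        Real.sqrt_nonneg μ, mul_nonneg (Real.sqrt_nonneg ‖z‖) (Real.sqrt_nonneg μ)]
    rw [mul_assoc]
    refine mul_le_mul_of_nonneg_left ?_ hC.le
    nlinarith [mul_nonneg (Real.sqrt_nonneg ‖z‖) (Real.sqrt_nonneg μ)]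
  have hFreal : ∀ z, F z = 0 → z.im = 0 := fun z hz => by simpa using hreal _ hz
  obtain ⟨G, hG, hFG, hGg, hGj⟩ := exists_div_self hF (by simp [hFdef, hz0])
    (by positivity) hFgrow
  have hG0 : G 0 = 0 := by
    have := hGj 0
    rw [hFj, hz1] at this
    simpa using this.symm
  obtain ⟨R, hR, hGR, hRg, hRj⟩ := exists_div_self hG hG0 (by positivity) hGg
  have j2 := hGj 1
  have j3 := hGj 2
  have j4 := hGj 3
  have j5 := hGj 4
  have i1 := hRj 0
  have i2 := hRj 1
  have i3 := hRj 2
  have i4 := hRj 3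
  norm_num [hFj] at j2 j3 j4 j5 i1 i2 i3 i4
  have hRreal : ∀ z, R z = 0 → z.im = 0 := fun z hz => hFreal z (by rw [hFG, hGR, hz]; simp)
  by_cases hk0 : k = 0
  · exfalso
    subst hk0
    have hR0 : R 0 = 0 := by
      rw [hk, i1] at j2
      simpa using j2.symm
    obtain ⟨Q, hQ, hRQ, hQg, hQj⟩ := exists_div_self hR hR0 (by positivity) hRg
    have a1 := hQj 0
    have a2 := hQj 1
    have a3 := hQj 2
    norm_num at a1 a2 a3
    have hQ0 : 6 * Q 0 = -2 * s * m₀ := by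
      rw [← a1]; linear_combination -3 * i2 - j3 + v3
    have hQ0' : Q 0 ≠ 0 := by
      intro h
      rw [h] at hQ0
      have : (s : ℂ) * m₀ ≠ 0 := by exact_mod_cast mul_ne_zero hs.ne' hne
      exact this (by linear_combination hQ0 / 2)
    obtain ⟨r₁, r₂, r₃, e1, e2, e3, l1, -⟩ := laguerre_inequalities_scaled hQ hQ0'
      (fun z hz => hRreal z (by rw [hRQ, hz]; simp)) (by positivity) hQg
    have b1 : (r₁ : ℂ) * Q 0 = 0 := by
      rw [← e1]
      push_cast at v4
      simp only [iteratedDeriv_one] at *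
      linear_combination -a2 / 2 - i3 / 6 - j4 / 24 + v4 / 24
    have b2 : (r₂ : ℂ) * Q 0 = (2 / 5 * μ : ℝ) * Q 0 := by
      rw [← e2]
      push_cast at v5 ⊢
      linear_combination -a3 / 3 - i4 / 12 - j5 / 60 + v5 / 60 - (μ / 15) * hQ0
    have r1 : r₁ = 0 := by exact_mod_cast (mul_eq_zero.1 b1).resolve_right hQ0'
    have r2 : r₂ = 2 / 5 * μ := by exact_mod_cast mul_right_cancel₀ hQ0' b2
    rw [r1, r2] at l1
    nlinarith
  · have hR0 : R 0 = k / 2 := by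
      rw [hk, i1] at j2
      linear_combination -j2 / 2
    have hkc : (k : ℂ) ≠ 0 := by exact_mod_cast hk0
    have hR0' : R 0 ≠ 0 := by rw [hR0]; exact div_ne_zero hkc two_ne_zero
    obtain ⟨r₁, r₂, r₃, e1, e2, e3, l1, l2⟩ := laguerre_inequalities_scaled hR hR0' hRreal
      (by positivity) hRg
    simp only [iteratedDeriv_one] at *
    have b1 : ((r₁ * k : ℝ) : ℂ) = ((-2 / 3 * s * m₀ : ℝ) : ℂ) := by
      push_cast
      rw [hR0] at e1
      linear_combination -2 * e1 - i2 - j3 / 3 + v3 / 3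
    have b2 : ((r₂ * k : ℝ) : ℂ) = ((2 / 3 * μ * k : ℝ) : ℂ) := by
      push_cast
      rw [hR0] at e2
      linear_combination -2 * e2 - 2 * i3 / 3 - j4 / 6 + v4 / 6
    have b3 : ((r₃ * k : ℝ) : ℂ) = (((6 / 5 * μ * r₁ + 1) * k : ℝ) : ℂ) := by
      have b1' := b1
      push_cast at b1' ⊢
      rw [hR0] at e3
      linear_combination -2 * e3 - i4 / 2 - j5 / 10 + v5 / 10 - 6 / 5 * μ * b1'
    have c1 : r₁ * k = -2 / 3 * s * m₀ := by exact_mod_cast b1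
    have c2 : r₂ = 2 / 3 * μ := mul_right_cancel₀ hk0 (by exact_mod_cast b2)
    have c3 : r₃ = 6 / 5 * μ * r₁ + 1 := mul_right_cancel₀ hk0 (by exact_mod_cast b3)
    rw [c2] at l1 l2
    rw [c3] at l2
    have hr : r₁ < 0 := by
      by_contra! h
      nlinarith [mul_le_mul_of_nonneg_left l1 hμ.le, mul_pos hμ hμ]
    have : s * (k * m₀) = -3 / 2 * r₁ * k ^ 2 := by linear_combination 3 / 2 * k * c1
    have hpos : 0 < s * (k * m₀) := by
      rw [this]
      have : 0 < k ^ 2 := by positivity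
      nlinarith
    exact pos_of_mul_pos_right hpos hs.le

/-- First-order Taylor remainder bound on a ball where the second derivative is bounded by `η`. -/
lemma norm_sub_sub_le_of_norm_deriv2_le {h h1 h2 : ℂ → ℂ} {c : ℂ} {r η : ℝ}
    (hd : ∀ w, HasDerivAt h (h1 w) w) (hd1 : ∀ w, HasDerivAt h1 (h2 w) w)
    (hb : ∀ w ∈ Metric.ball c r, ‖h2 w‖ ≤ η) {z w : ℂ}
    (hz : z ∈ Metric.ball c r) (hw : w ∈ Metric.ball c r) :
    ‖h w - h z - h1 z * (w - z)‖ ≤ η * ‖w - z‖ ^ 2 := by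
  have hη : 0 ≤ η := (norm_nonneg _).trans (hb z hz)
  have hsub : segment ℝ z w ⊆ Metric.ball c r := (convex_ball c r).segment_subset hz hw
  have h1b : ∀ p ∈ segment ℝ z w, ‖h1 p - h1 z‖ ≤ η * ‖w - z‖ := by
    intro p hp
    have := (convex_ball c r).norm_image_sub_le_of_norm_hasDerivWithin_le (f := h1) (f' := h2)
      (fun x _ => (hd1 x).hasDerivWithinAt) hb hz (hsub hp)
    refine this.trans (mul_le_mul_of_nonneg_left ?_ hη)
    obtain ⟨t, ht, rfl⟩ := (segment_eq_image' ℝ z w ▸ hp :)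
    simp only [add_sub_cancel_left, norm_smul, Real.norm_eq_abs, abs_of_nonneg ht.1]
    exact mul_le_of_le_one_left (norm_nonneg _) ht.2
  have := (convex_segment z w).norm_image_sub_le_of_norm_hasDerivWithin_le
    (f := fun p => h p - h1 z * p) (f' := fun p => h1 p - h1 z)
    (fun x _ => by
      have := (hd x).sub ((hasDerivAt_id x).const_mul (h1 z))
      exact (this.congr_deriv (by simp)).hasDerivWithinAt) h1b (left_mem_segment ℝ z w)
      (right_mem_segment ℝ z w)
  calc _ = ‖h w - h1 z * w - (h z - h1 z * z)‖ := by congr 1; ring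
    _ ≤ _ := this
    _ = _ := by ring

/-- If `f''` is close to a real constant `k` near a real point and `f` vanishes at a conjugate
pair (or doubly at a real point), then `k * f` is nonnegative at nearby real points. -/
lemma sq_le_re_of_conj_zeros {f f1 f2 : ℂ → ℂ} {c x k r : ℝ} {z : ℂ}
    (hd : ∀ w, HasDerivAt f (f1 w) w) (hd1 : ∀ w, HasDerivAt f1 (f2 w) w)
    (hb : ∀ w ∈ Metric.ball (c : ℂ) r, ‖f2 w - k‖ ≤ |k| / 12)
    (hz : z ∈ Metric.ball (c : ℂ) r) (hx : (x : ℂ) ∈ Metric.ball (c : ℂ) r)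
    (h0 : f z = 0) (h0' : f (starRingEnd ℂ z) = 0) (hor : z.im ≠ 0 ∨ f1 z = 0) :
    k ^ 2 / 4 * ‖(x : ℂ) - z‖ ^ 2 ≤ (k * f x).re := by
  set zc := starRingEnd ℂ z with hzc
  have hzcb : zc ∈ Metric.ball (c : ℂ) r := by
    rw [mem_ball_iff_norm] at hz ⊢
    have : zc - c = starRingEnd ℂ (z - c) := by simp [hzc]
    rwa [this, Complex.norm_conj]
  set h : ℂ → ℂ := fun w => f w - k / 2 * ((w - z) * (w - zc)) with hh
  set h1 : ℂ → ℂ := fun w => f1 w - k / 2 * (2 * w - z - zc) with hh1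
  have e1 : ∀ w, HasDerivAt h (h1 w) w := by
    intro w
    have := (hd w).sub ((((hasDerivAt_id w).sub_const z).mul
      ((hasDerivAt_id w).sub_const zc)).const_mul ((k : ℂ) / 2))
    refine this.congr_deriv ?_
    simp only [hh1, id]; ring
  have e2 : ∀ w, HasDerivAt h1 (f2 w - k) w := by
    intro w
    have := (hd1 w).sub (((((hasDerivAt_id w).const_mul (2 : ℂ)).sub_const z).sub_const
      zc).const_mul ((k : ℂ) / 2))
    refine this.congr_deriv ?_
    simp
  have tay := fun w hw => norm_sub_sub_le_of_norm_deriv2_le e1 e2 hb hz (w := w) hw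
  have hz0 : h z = 0 := by simp [hh, h0]
  have hzc0 : h zc = 0 := by simp [hh, h0']
  have hdist : ‖zc - z‖ ≤ 2 * ‖(x : ℂ) - z‖ := by
    have : ‖(x : ℂ) - zc‖ = ‖(x : ℂ) - z‖ := by
      rw [← Complex.norm_conj]; simp [hzc]
    calc ‖zc - z‖ = ‖((x : ℂ) - z) - (x - zc)‖ := by congr 1; ring
      _ ≤ _ := norm_sub_le _ _
      _ = _ := by rw [this]; ring
  have hk0 := abs_nonneg k
  have hder : ‖h1 z‖ ≤ |k| / 12 * (2 * ‖(x : ℂ) - z‖) := by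
    by_cases hi : z.im = 0
    · have hf1 : f1 z = 0 := hor.resolve_left (not_not.mpr hi)
      have : zc = z := by rw [hzc]; exact Complex.conj_eq_iff_im.mpr hi
      have : h1 z = 0 := by simp [hh1, hf1, this]; right; ring
      rw [this, norm_zero]; positivity
    · have hne : zc - z ≠ 0 := by
        intro h
        exact hi (Complex.conj_eq_iff_im.mp (sub_eq_zero.mp h))
      have hpos : 0 < ‖zc - z‖ := norm_pos_iff.mpr hne
      have := tay zc hzcb
      rw [hz0, hzc0, sub_zero, zero_sub, norm_neg, norm_mul, sq, ← mul_assoc] at this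
      have := le_of_mul_le_mul_right this hpos
      exact this.trans (mul_le_mul_of_nonneg_left hdist (by positivity))
  have hhx : ‖h x‖ ≤ |k| / 4 * ‖(x : ℂ) - z‖ ^ 2 := by
    have := tay x hx
    rw [hz0, sub_zero] at this
    calc ‖h x‖ = ‖(h x - h1 z * (x - z)) + h1 z * (x - z)‖ := by congr 1; ring
      _ ≤ _ := norm_add_le _ _
      _ ≤ |k| / 12 * ‖(x : ℂ) - z‖ ^ 2 + |k| / 12 * (2 * ‖(x : ℂ) - z‖) * ‖(x : ℂ) - z‖ := by
          rw [norm_mul]; gcongr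
      _ = _ := by ring
  have hprod : ((x : ℂ) - z) * (x - zc) = ((‖(x : ℂ) - z‖ ^ 2 : ℝ) : ℂ) := by
    have : (x : ℂ) - zc = starRingEnd ℂ (x - z) := by simp [hzc]
    rw [this, Complex.mul_conj, Complex.normSq_eq_norm_sq]
  have hfx : (k : ℂ) * f x = ((k ^ 2 / 2 * ‖(x : ℂ) - z‖ ^ 2 : ℝ) : ℂ) + k * h x := by
    simp only [hh]; rw [hprod]; push_cast; ring
  have hre : -(|k| * (|k| / 4 * ‖(x : ℂ) - z‖ ^ 2)) ≤ ((k : ℂ) * h x).re := by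
    have h1 := Complex.abs_re_le_norm ((k : ℂ) * h x)
    rw [norm_mul, Complex.norm_real, Real.norm_eq_abs] at h1
    have h2 := neg_le_of_abs_le h1
    have h3 := mul_le_mul_of_nonneg_left hhx hk0
    linarith
  rw [hfx, Complex.add_re, Complex.ofReal_re]
  have : |k| * (|k| / 4 * ‖(x : ℂ) - z‖ ^ 2) = k ^ 2 / 4 * ‖(x : ℂ) - z‖ ^ 2 := by
    rw [← sq_abs k]; ring
  rw [this] at hre
  linarith

open Filter Topology Metric in
/-- Zeros of a continuous family of entire functions persist under small parameter changes. -/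
lemma eventually_exists_zero_near {H : ℝ → ℂ → ℂ} (hc : Continuous (Function.uncurry H))
    (hd : ∀ s, Differentiable ℂ (H s)) {s₀ : ℝ} {z₀ : ℂ} (h0 : H s₀ z₀ = 0)
    (hne : ∃ w, H s₀ w ≠ 0) {r : ℝ} (hr : 0 < r) :
    ∀ᶠ s in 𝓝 s₀, ∃ z ∈ Metric.ball z₀ r, H s z = 0 := by
  have han : AnalyticOnNhd ℂ (H s₀) Set.univ := (hd s₀).differentiableOn.analyticOnNhd isOpen_univ
  have hiso : ∀ᶠ z in 𝓝[≠] z₀, H s₀ z ≠ 0 := by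
    rcases (han z₀ trivial).eventually_eq_zero_or_eventually_ne_zero with h | h
    · obtain ⟨w, hw⟩ := hne
      exact absurd (han.eqOn_zero_of_preconnected_of_eventuallyEq_zero isPreconnected_univ
        (Set.mem_univ z₀) h (Set.mem_univ w)) hw
    · exact h
  obtain ⟨δ, hδ, hball⟩ := Metric.eventually_nhds_iff.mp (eventually_nhdsWithin_iff.mp hiso)
  set ρ := min r δ / 2 with hρ
  have hρ0 : 0 < ρ := by positivity
  have hρr : ρ < r := by have := min_le_left r δ; linarith [lt_min hr hδ]
  have hρδ : ρ < δ := by have := min_le_right r δ; linarith [lt_min hr hδ]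
  have hcomp : IsCompact (sphere z₀ ρ) := isCompact_sphere z₀ ρ
  have hnon : ∀ z ∈ sphere z₀ ρ, H s₀ z ≠ 0 := by
    intro z hz
    rw [mem_sphere] at hz
    exact hball (by rw [hz]; exact hρδ) (by rintro rfl; simp at hz; linarith)
  have hnemp : (sphere z₀ ρ).Nonempty := NormedSpace.sphere_nonempty.mpr hρ0.le
  obtain ⟨zm, hzm, hmin⟩ := hcomp.exists_isMinOn hnemp ((hd s₀).continuous.norm.continuousOn)
  set m := ‖H s₀ zm‖ with hm
  have hm0 : 0 < m := norm_pos_iff.mpr (hnon zm hzm)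
  have hev1 : ∀ᶠ s in 𝓝 s₀, ∀ z ∈ sphere z₀ ρ, m / 2 < ‖H s z‖ := by
    refine hcomp.eventually_forall_of_forall_eventually fun z hz => ?_
    have hcz : Continuous fun p : ℝ × ℂ => ‖H p.1 p.2‖ := hc.norm
    refine hcz.continuousAt.eventually_const_lt ?_
    have := hmin hz
    simp only [Set.mem_ofPred_eq] at this
    show m / 2 < ‖H s₀ z‖
    linarith
  have hev2 : ∀ᶠ s in 𝓝 s₀, ‖H s z₀‖ < m / 8 := by
    have hcz : Continuous fun s : ℝ => ‖H s z₀‖ :=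
      (hc.comp (Continuous.prodMk_left z₀)).norm
    refine hcz.continuousAt.eventually_lt_const ?_
    simp [h0, hm0]
  filter_upwards [hev1, hev2] with s h1 h2
  have hsph : ∀ z ∈ sphere z₀ ρ, m / 4 ≤ ‖H s z - H s z₀‖ := by
    intro z hz
    have := norm_sub_norm_le (H s z) (H s z₀)
    have := h1 z hz
    linarith
  by_contra hcon
  push Not at hcon
  have hfreq : ∃ᶠ z in 𝓝 z₀, H s z ≠ H s z₀ := by
    by_contra hf
    rw [not_frequently] at hf
    have hans : AnalyticOnNhd ℂ (H s) Set.univ := (hd s).differentiableOn.analyticOnNhd isOpen_univ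
    have := hans.eqOn_of_preconnected_of_eventuallyEq (g := fun _ => H s z₀)
      (fun _ _ => analyticAt_const) isPreconnected_univ
      (Set.mem_univ z₀) (hf.mono fun z hz => not_not.mp hz) (Set.mem_univ zm)
    have h3 := hsph zm hzm
    simp only at this
    rw [this, sub_self, norm_zero] at h3
    linarith
  have := (hd s).diffContOnCl.ball_subset_image_closedBall (z₀ := z₀) hρ0 hsph hfreq
  obtain ⟨z, hz, hz0⟩ := this (show (0 : ℂ) ∈ ball (H s z₀) (m / 4 / 2) by
    rw [mem_ball, dist_comm, dist_zero_right]; linarith)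
  exact hcon z (closedBall_subset_ball hρr hz) hz0

/-- Strict monotonicity in the parameter, on an interval where the real part of the derivative
in the parameter is positive. -/
lemma re_lt_re_of_deriv_param_pos {H M : ℝ → ℂ → ℂ} {z : ℂ} {k a b : ℝ}
    (hM : ∀ s, HasDerivAt (fun t => H t z) (M s z) s) (hab : a < b)
    (hpos : ∀ s ∈ Set.Icc a b, 0 < ((k : ℂ) * M s z).re) :
    ((k : ℂ) * H a z).re < ((k : ℂ) * H b z).re := by
  have hder : ∀ s, HasDerivAt (fun t => ((k : ℂ) * H t z).re) (((k : ℂ) * M s z).re) s := by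
    intro s
    have := (hM s).const_mul (k : ℂ)
    exact Complex.reCLM.hasFDerivAt.comp_hasDerivAt s this
  have hmono : StrictMonoOn (fun t => ((k : ℂ) * H t z).re) (Set.Icc a b) := by
    refine strictMonoOn_of_deriv_pos (convex_Icc a b)
      (fun s _ => (hder s).continuousAt.continuousWithinAt) fun s hs => ?_
    rw [(hder s).deriv]
    exact hpos s (interior_subset hs)
  exact hmono (Set.left_mem_Icc.mpr hab.le) (Set.right_mem_Icc.mpr hab.le) hab

open Filter Topology Metric in
/-- Abstract continuation principle: if at every real double zero of a member of a real
one-parameter family (all of whose zeros are real) the second derivative and the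
derivative in the parameter have the same sign, then after a first double zero there are always
non-real zeros. -/
theorem exists_nonreal_zero_of_double_zero_sign {H H1 H2 M : ℝ → ℂ → ℂ}
    (hc : Continuous (Function.uncurry H)) (hc1 : Continuous (Function.uncurry H1))
    (hc2 : Continuous (Function.uncurry H2)) (hcM : Continuous (Function.uncurry M))
    (hd : ∀ s z, HasDerivAt (H s) (H1 s z) z) (hd1 : ∀ s z, HasDerivAt (H1 s) (H2 s z) z)
    (hM : ∀ z s, HasDerivAt (fun t => H t z) (M s z) s)
    (hconj : ∀ s z, H s (starRingEnd ℂ z) = starRingEnd ℂ (H s z))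
    (hne : ∀ s, 0 < s → ∃ w, H s w ≠ 0)
    (hsign : ∀ s, 0 < s → (∀ z, H s z = 0 → z.im = 0) → ∀ μ : ℝ, H s μ = 0 → H1 s μ = 0 →
      ∃ k m₀ : ℝ, H2 s μ = k ∧ M s μ = m₀ ∧ 0 < k * m₀)
    {s₁ S : ℝ} (hs₁ : 0 < s₁) (hS : s₁ < S)
    (hbdd : ∃ R : ℝ, ∀ s ∈ Set.Icc s₁ S, ∀ z, H s z = 0 → z.im ≠ 0 → ‖z‖ ≤ R)
    {μ₁ : ℝ} (h0 : H s₁ μ₁ = 0) (h01 : H1 s₁ μ₁ = 0) :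
    ∃ z, z.im ≠ 0 ∧ H S z = 0 := by
  by_contra hcon
  push Not at hcon
  have hdiff : ∀ s, Differentiable ℂ (H s) := fun s z => (hd s z).differentiableAt
  -- local control near a double zero
  have hloc : ∀ (s₀ μ k m₀ : ℝ), H2 s₀ μ = k → M s₀ μ = m₀ → 0 < k * m₀ → ∃ δ > 0,
      ∀ s, |s - s₀| < δ → ∀ w ∈ ball (μ : ℂ) δ,
        ‖H2 s w - k‖ ≤ |k| / 12 ∧ 0 < ((k : ℂ) * M s w).re := by
    intro s₀ μ k m₀ h2 hm hk
    have hk0 : k ≠ 0 := by rintro rfl; simp at hk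
    have ev1 : ∀ᶠ p : ℝ × ℂ in 𝓝 (s₀, (μ : ℂ)), ‖H2 p.1 p.2 - k‖ < |k| / 12 := by
      have : Continuous fun p : ℝ × ℂ => ‖H2 p.1 p.2 - k‖ := (hc2.sub continuous_const).norm
      refine this.continuousAt.eventually_lt_const ?_
      simp [h2, hk0]
    have ev2 : ∀ᶠ p : ℝ × ℂ in 𝓝 (s₀, (μ : ℂ)), 0 < ((k : ℂ) * M p.1 p.2).re := by
      have : Continuous fun p : ℝ × ℂ => ((k : ℂ) * M p.1 p.2).re :=
        Complex.continuous_re.comp (continuous_const.mul hcM)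
      refine this.continuousAt.eventually_const_lt ?_
      simp only [hm]
      rw [← Complex.ofReal_mul, Complex.ofReal_re]
      exact hk
    obtain ⟨δ, hδ, h⟩ := Metric.eventually_nhds_iff.mp (ev1.and ev2)
    refine ⟨δ, hδ, fun s hs w hw => ?_⟩
    have := @h (s, w) (by
      rw [Prod.dist_eq]; exact max_lt (by rwa [Real.dist_eq]) hw)
    exact ⟨this.1.le, this.2⟩
  set B : Set ℝ := {s | s ∈ Set.Icc s₁ S ∧ ∃ z, z.im ≠ 0 ∧ H s z = 0} with hB
  have hBne : B.Nonempty := by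
    by_cases hr : ∃ z, z.im ≠ 0 ∧ H s₁ z = 0
    · exact ⟨s₁, ⟨le_rfl, hS.le⟩, hr⟩
    push Not at hr
    obtain ⟨k, m₀, h2, hm, hk⟩ := hsign s₁ hs₁
      (fun z hz => by_contra fun hi => hr z hi hz) μ₁ h0 h01
    obtain ⟨δ, hδ, hl⟩ := hloc s₁ μ₁ k m₀ h2 hm hk
    have evz := eventually_exists_zero_near hc hdiff h0 (hne s₁ hs₁) hδ
    obtain ⟨δ', hδ', hz⟩ := Metric.eventually_nhds_iff.mp evz
    set τ := min (min δ δ') (S - s₁) / 2 with hτ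
    have hmin : 0 < min (min δ δ') (S - s₁) := lt_min (lt_min hδ hδ') (sub_pos.mpr hS)
    have hτ0 : 0 < τ := by positivity
    have hτδ : τ < δ := by
      have := (min_le_left (min δ δ') (S - s₁)).trans (min_le_left _ _); linarith
    have hτδ' : τ < δ' := by
      have := (min_le_left (min δ δ') (S - s₁)).trans (min_le_right _ _); linarith
    have hτS : τ < S - s₁ := by
      have := (min_le_right (min δ δ') (S - s₁)); linarith
    obtain ⟨z, hzb, hz0⟩ := @hz (s₁ + τ) (by rw [Real.dist_eq]; simpa [abs_of_pos hτ0] using hτδ')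
    refine ⟨s₁ + τ, ⟨by linarith, by linarith⟩, z, fun hi => ?_, hz0⟩
    have hzx : z = (z.re : ℂ) := Complex.ext rfl (by simp [hi])
    have hge := sq_le_re_of_conj_zeros (x := z.re) (hd s₁) (hd1 s₁)
      (fun w hw => (hl s₁ (by simpa using hδ) w hw).1) (mem_ball_self hδ) (hzx ▸ hzb)
      h0 (by simpa using h0) (Or.inr h01)
    have hlt := re_lt_re_of_deriv_param_pos (k := k) (hM z) (lt_add_of_pos_right s₁ hτ0)
      (fun s hs => (hl s (by rw [abs_of_nonneg (by linarith [hs.1])]; linarith [hs.2]) z hzb).2)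
    rw [hz0, mul_zero, Complex.zero_re, hzx] at hlt
    have : 0 ≤ k ^ 2 / 4 * ‖(z.re : ℂ) - μ₁‖ ^ 2 := by positivity
    linarith
  have hBb : BddAbove B := ⟨S, fun s hs => hs.1.2⟩
  set s₂ := sSup B with hs₂
  obtain ⟨b, hb⟩ := hBne
  have hs₁₂ : s₁ ≤ s₂ := hb.1.1.trans (le_csSup hBb hb)
  have hs₂S : s₂ ≤ S := csSup_le ⟨b, hb⟩ fun s hs => hs.1.2
  have hs₂0 : 0 < s₂ := hs₁.trans_le hs₁₂
  have hreal : ∀ z, H s₂ z = 0 → z.im = 0 := by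
    intro z hz
    by_contra hi
    have hlt : s₂ < S := lt_of_le_of_ne hs₂S fun h => hcon z hi (h ▸ hz)
    have evz := eventually_exists_zero_near hc hdiff hz (hne s₂ hs₂0) (abs_pos.mpr hi)
    obtain ⟨s, ⟨w, hw, hw0⟩, hs⟩ := ((evz.filter_mono nhdsWithin_le_nhds).and
      (Ioo_mem_nhdsGT hlt)).exists
    refine absurd (le_csSup hBb (show s ∈ B from ⟨⟨hs₁₂.trans hs.1.le, hs.2.le⟩, w, ?_, hw0⟩))
      (not_le.mpr hs.1)
    intro hwi
    rw [mem_ball_iff_norm] at hw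
    have := (Complex.abs_im_le_norm (w - z)).trans_lt hw
    simp [hwi] at this
  obtain ⟨u, -, hut, huB⟩ := exists_seq_tendsto_sSup ⟨b, hb⟩ hBb
  choose z hzi hz0 using fun n => (huB n).2
  obtain ⟨R, hR⟩ := hbdd
  obtain ⟨ζ, -, φ, hφ, hζ⟩ := (isCompact_closedBall (0 : ℂ) R).tendsto_subseq
    (x := z) (fun n => by simpa using hR (u n) (huB n).1 (z n) (hz0 n) (hzi n))
  have hut' : Tendsto (u ∘ φ) atTop (𝓝 s₂) := hut.comp hφ.tendsto_atTop
  have hpair : Tendsto (fun n => (u (φ n), z (φ n))) atTop (𝓝 (s₂, ζ)) := hut'.prodMk_nhds hζ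
  have hζ0 : H s₂ ζ = 0 := by
    have h1 := (hc.tendsto (s₂, ζ)).comp hpair
    have h2 : (Function.uncurry H ∘ fun n => (u (φ n), z (φ n))) = fun _ => (0 : ℂ) := by
      funext n; exact hz0 (φ n)
    rw [h2] at h1
    exact tendsto_nhds_unique h1 tendsto_const_nhds
  have hζi := hreal ζ hζ0
  have hζx : ζ = (ζ.re : ℂ) := Complex.ext rfl (by simp [hζi])
  set x := ζ.re with hx
  rw [hζx] at hζ0 hpair hζ
  have hzc : ∀ n, H (u n) (starRingEnd ℂ (z n)) = 0 := fun n => by rw [hconj, hz0, map_zero]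
  have hballc : ∀ (w : ℂ) (δ : ℝ), w ∈ ball (x : ℂ) δ → starRingEnd ℂ w ∈ ball (x : ℂ) δ := by
    intro w δ hw
    rw [mem_ball_iff_norm] at hw ⊢
    have : starRingEnd ℂ w - x = starRingEnd ℂ (w - x) := by simp
    rwa [this, Complex.norm_conj]
  have hζ1 : H1 s₂ x = 0 := by
    have ev : ∀ᶠ p : ℝ × ℂ in 𝓝 (s₂, (x : ℂ)), ‖H2 p.1 p.2‖ < ‖H2 s₂ x‖ + 1 := by
      have : Continuous fun p : ℝ × ℂ => ‖H2 p.1 p.2‖ := hc2.norm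
      exact this.continuousAt.eventually_lt_const (by simp)
    obtain ⟨δ, hδ, h⟩ := Metric.eventually_nhds_iff.mp ev
    set η := ‖H2 s₂ x‖ + 1 with hη
    have hbound : ∀ᶠ n in atTop, ‖H1 (u (φ n)) (z (φ n))‖ ≤
        η * ‖starRingEnd ℂ (z (φ n)) - z (φ n)‖ := by
      filter_upwards [hpair.eventually (Metric.ball_mem_nhds _ hδ)] with n hn
      rw [Prod.dist_eq, max_lt_iff] at hn
      have hzb : z (φ n) ∈ ball (x : ℂ) δ := hn.2
      have := norm_sub_sub_le_of_norm_deriv2_le (hd (u (φ n))) (hd1 (u (φ n))) (η := η)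
        (fun w hw => (@h (u (φ n), w) (by rw [Prod.dist_eq]; exact max_lt hn.1 hw)).le)
        hzb (hballc _ _ hzb)
      rw [hz0, hzc, sub_zero, zero_sub, norm_neg, norm_mul, sq, ← mul_assoc] at this
      refine le_of_mul_le_mul_right this (norm_pos_iff.mpr fun h0 => hzi (φ n) ?_)
      exact Complex.conj_eq_iff_im.mp (sub_eq_zero.mp h0)
    have hr : Tendsto (fun n => η * ‖starRingEnd ℂ (z (φ n)) - z (φ n)‖) atTop (𝓝 0) := by
      have h1 : Tendsto (fun n => starRingEnd ℂ (z (φ n))) atTop (𝓝 (starRingEnd ℂ (x : ℂ))) :=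
        (Complex.continuous_conj.tendsto _).comp hζ
      have h2 := ((h1.sub hζ).norm).const_mul η
      simpa using h2
    have hl := ((hc1.tendsto (s₂, (x : ℂ))).comp hpair).norm
    have := le_of_tendsto_of_tendsto hl hr hbound
    exact norm_le_zero_iff.mp this
  obtain ⟨k, m₀, h2, hm, hk⟩ := hsign s₂ hs₂0 hreal x hζ0 hζ1
  obtain ⟨δ, hδ, hl⟩ := hloc s₂ x k m₀ h2 hm hk
  obtain ⟨n, hn⟩ := (hpair.eventually (Metric.ball_mem_nhds _ hδ)).exists
  rw [Prod.dist_eq, max_lt_iff, Real.dist_eq] at hn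
  have hun : u (φ n) < s₂ := by
    refine lt_of_le_of_ne (le_csSup hBb (huB _)) fun h => hzi (φ n) (hreal _ ?_)
    rw [← h]; exact hz0 _
  have hge := sq_le_re_of_conj_zeros (x := x) (hd (u (φ n))) (hd1 (u (φ n)))
      (fun w hw => (hl _ hn.1 w hw).1) hn.2 (mem_ball_self hδ) (hz0 _) (hzc _) (Or.inl (hzi _))
  have hlt := re_lt_re_of_deriv_param_pos (k := k) (hM x) hun
      (fun s hs => (hl s (by
        have := hn.1
        rw [abs_sub_comm, abs_of_pos (by linarith)] at this
        rw [abs_sub_comm, abs_of_nonneg (by linarith [hs.2])]; linarith [hs.1]) x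
        (mem_ball_self hδ)).2)
  rw [hζ0, mul_zero, Complex.zero_re] at hlt
  have : 0 ≤ k ^ 2 / 4 * ‖(x : ℂ) - z (φ n)‖ ^ 2 := by positivity
  linarith

/-- A function with nonnegative continuous derivative, positive at one point of the interval,
takes different values at the endpoints. -/
lemma ne_of_hasDerivAt_nonneg_of_pos {g g' : ℝ → ℝ} {a b c : ℝ} (hab : a < b)
    (hg : ∀ t, HasDerivAt g (g' t) t) (hc : Continuous g')
    (h0 : ∀ t ∈ Set.Icc a b, 0 ≤ g' t) (hcm : c ∈ Set.Icc a b) (hpos : 0 < g' c) : g a ≠ g b := by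
  have h1 := intervalIntegral.integral_pos hab hc.continuousOn
    (fun t ht => h0 t ⟨ht.1.le, ht.2⟩) ⟨c, hcm, hpos⟩
  rw [intervalIntegral.integral_eq_sub_of_hasDerivAt (fun t _ => hg t)
    (hc.intervalIntegrable a b)] at h1
  intro h
  linarith

/-- `(y, Y)` is a solution pair `y' = Y`, `Y' = -(μ + i t) y` on the line. -/
def IsRotatedAiryPair (μ : ℂ) (y Y : ℝ → ℂ) : Prop :=
  (∀ t, HasDerivAt y (Y t) t) ∧ ∀ t : ℝ, HasDerivAt Y (-(μ + I * t) * y t) t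

lemma IsRotatedAiryPair.continuous_left {μ : ℂ} {y Y : ℝ → ℂ} (h : IsRotatedAiryPair μ y Y) :
    Continuous y := continuous_iff_continuousAt.mpr fun t => (h.1 t).continuousAt

lemma IsRotatedAiryPair.continuous_right {μ : ℂ} {y Y : ℝ → ℂ} (h : IsRotatedAiryPair μ y Y) :
    Continuous Y := continuous_iff_continuousAt.mpr fun t => (h.2 t).continuousAt

lemma IsRotatedAiryPair.hasDerivAt_mul_conj {μ : ℂ} {y Y : ℝ → ℂ}
    (h : IsRotatedAiryPair μ y Y) (t : ℝ) :
    HasDerivAt (fun t => Y t * starRingEnd ℂ (y t))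
      (-(μ + I * t) * (‖y t‖ ^ 2 : ℝ) + (‖Y t‖ ^ 2 : ℝ)) t := by
  have h1 : HasDerivAt (fun t => starRingEnd ℂ (y t)) (starRingEnd ℂ (Y t)) t :=
    Complex.conjCLE.toContinuousLinearMap.hasFDerivAt.comp_hasDerivAt t (h.1 t)
  refine ((h.2 t).mul h1).congr_deriv ?_
  rw [mul_assoc, Complex.mul_conj, Complex.mul_conj, Complex.normSq_eq_norm_sq,
    Complex.normSq_eq_norm_sq]

lemma IsRotatedAiryPair.re_mul_conj {μ : ℂ} {y Y : ℝ → ℂ}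
    (h : IsRotatedAiryPair μ y Y) (t : ℝ) :
    HasDerivAt (fun t => (Y t * starRingEnd ℂ (y t)).re) (‖Y t‖ ^ 2 - μ.re * ‖y t‖ ^ 2) t := by
  refine (Complex.reCLM.hasFDerivAt.comp_hasDerivAt t (h.hasDerivAt_mul_conj t)).congr_deriv ?_
  simp only [Complex.reCLM_apply, Complex.add_re, Complex.ofReal_re,
    Complex.neg_re, Complex.mul_re, Complex.I_re, Complex.I_im, Complex.ofReal_im]
  ring

lemma IsRotatedAiryPair.im_mul_conj {μ : ℂ} {y Y : ℝ → ℂ}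
    (h : IsRotatedAiryPair μ y Y) (t : ℝ) :
    HasDerivAt (fun t => (Y t * starRingEnd ℂ (y t)).im) (-(μ.im + t) * ‖y t‖ ^ 2) t := by
  refine (Complex.imCLM.hasFDerivAt.comp_hasDerivAt t (h.hasDerivAt_mul_conj t)).congr_deriv ?_
  simp only [Complex.imCLM_apply, Complex.add_im, Complex.ofReal_re,
    Complex.neg_im, Complex.mul_im, Complex.I_re, Complex.I_im, Complex.ofReal_im]
  ring

lemma IsRotatedAiryPair.re_pos {μ : ℂ} {y Y : ℝ → ℂ} (h : IsRotatedAiryPair μ y Y) {s : ℝ}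
    (hs : 0 < s) (hl : y (-s) = 0) (hr : y s = 0) (hY : Y (-s) ≠ 0) : 0 < μ.re := by
  by_contra hμ
  push Not at hμ
  have hcy := h.continuous_left
  have hcY := h.continuous_right
  refine ne_of_hasDerivAt_nonneg_of_pos (c := -s) (by linarith : -s < s) h.re_mul_conj
    (by fun_prop) (fun t _ => ?_) ⟨le_rfl, by linarith⟩ ?_ (by simp [hl, hr])
  · nlinarith [sq_nonneg ‖Y t‖, sq_nonneg ‖y t‖]
  · have := pow_pos (norm_pos_iff.mpr hY) 2
    rw [hl, norm_zero]
    linarith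

lemma IsRotatedAiryPair.abs_im_le {μ : ℂ} {y Y : ℝ → ℂ} (h : IsRotatedAiryPair μ y Y) {s : ℝ}
    (hs : 0 < s) (hl : y (-s) = 0) (hr : y s = 0) (hY : Y (-s) ≠ 0) : |μ.im| ≤ s := by
  have hcy := h.continuous_left
  have hcY := h.continuous_right
  obtain ⟨c, hc, hyc⟩ : ∃ c ∈ Set.Icc (-s) s, y c ≠ 0 := by
    by_contra hcon
    push Not at hcon
    refine ne_of_hasDerivAt_nonneg_of_pos (c := -s) (by linarith : -s < s) h.re_mul_conj
      (by fun_prop) (fun t ht => ?_) ⟨le_rfl, by linarith⟩ ?_ (by simp [hl, hr])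
    · simp [hcon t ht]
    · have := pow_pos (norm_pos_iff.mpr hY) 2
      rw [hl, norm_zero]
      linarith
  have hpos : 0 < ‖y c‖ ^ 2 := pow_pos (norm_pos_iff.mpr hyc) 2
  by_contra hμ
  push Not at hμ
  rcases lt_abs.mp hμ with hμ | hμ
  · refine ne_of_hasDerivAt_nonneg_of_pos (c := c) (by linarith : -s < s)
      (fun t => (h.im_mul_conj t).neg) (by fun_prop) (fun t ht => ?_) hc ?_ (by simp [hl, hr])
    · nlinarith [ht.1, sq_nonneg ‖y t‖, mul_nonneg (by linarith [ht.1] : 0 ≤ μ.im + t)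
        (sq_nonneg ‖y t‖)]
    · nlinarith [mul_pos (by linarith [hc.1] : 0 < μ.im + c) hpos]
  · refine ne_of_hasDerivAt_nonneg_of_pos (c := c) (by linarith : -s < s)
      h.im_mul_conj (by fun_prop) (fun t ht => ?_) hc ?_ (by simp [hl, hr])
    · exact mul_nonneg (by linarith [ht.2]) (sq_nonneg _)
    · exact mul_pos (by linarith [hc.2]) hpos

/-- Exponential bound of order one half in the spectral parameter. -/
lemma IsRotatedAiryPair.norm_le_exp {μ : ℂ} {y Y : ℝ → ℂ} (h : IsRotatedAiryPair μ y Y) {s : ℝ}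
    (hs : 0 < s) (hl : y (-s) = 0) :
    ‖y s‖ ≤ ‖Y (-s)‖ * Real.exp (2 * s * (1 + √s + √‖μ‖)) := by
  set k := 1 + √s + √‖μ‖ with hk
  have hs0 := Real.sqrt_nonneg s
  have hm0 := Real.sqrt_nonneg ‖μ‖
  have hk1 : 1 ≤ k := by linarith
  have hk2 : ‖μ‖ + s ≤ k ^ 2 := by
    nlinarith [Real.sq_sqrt hs.le, Real.sq_sqrt (norm_nonneg μ), mul_nonneg hs0 hm0]
  have hder : ∀ t, HasDerivAt (fun t => (Y t, (k : ℂ) * y t))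
      (-(μ + I * t) * y t, (k : ℂ) * Y t) t :=
    fun t => (h.2 t).prodMk ((h.1 t).const_mul (k : ℂ))
  have hg := norm_le_gronwallBound_of_norm_deriv_right_le (δ := ‖Y (-s)‖) (K := k) (ε := 0)
    (a := -s) (b := s)
    (fun t _ => (hder t).continuousAt.continuousWithinAt)
    (fun t _ => (hder t).hasDerivWithinAt) (by simp [hl, Prod.norm_def]) (fun t ht => by
      have hk' : ‖(k : ℂ)‖ = k := by rw [Complex.norm_real, Real.norm_of_nonneg (by linarith)]
      have hle : ‖μ + I * t‖ ≤ k ^ 2 := by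
        refine (norm_add_le _ _).trans (le_trans ?_ hk2)
        simp only [norm_mul, Complex.norm_I, Complex.norm_real, one_mul, Real.norm_eq_abs]
        gcongr
        exact abs_le.mpr ⟨ht.1, ht.2.le⟩
      rw [add_zero, Prod.norm_def]
      refine max_le ?_ ?_
      · calc ‖-(μ + I * t) * y t‖ = ‖μ + I * t‖ * ‖y t‖ := by rw [norm_mul, norm_neg]
          _ ≤ k ^ 2 * ‖y t‖ := by gcongr
          _ = k * ‖(k : ℂ) * y t‖ := by rw [norm_mul, hk']; ring
          _ ≤ _ := by gcongr; exact le_max_right _ _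
      · rw [norm_mul, hk']
        gcongr
        exact le_max_left _ _) s ⟨by linarith, le_rfl⟩
  rw [gronwallBound_ε0] at hg
  have h1 : ‖y s‖ ≤ ‖(Y s, (k : ℂ) * y s)‖ := by
    refine le_trans ?_ (le_max_right _ _)
    simp only [norm_mul, Complex.norm_real, Real.norm_of_nonneg (by linarith : (0:ℝ) ≤ k)]
    exact le_mul_of_one_le_left (norm_nonneg _) hk1
  refine h1.trans (hg.trans (le_of_eq ?_))
  congr 2; ring

lemma norm_exp_I_mul_ofReal_mul (w t : ℝ) : ‖Complex.exp (I * w * t)‖ = 1 := by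
  rw [show I * (w : ℂ) * t = ((w * t : ℝ) : ℂ) * I by push_cast; ring]
  exact Complex.norm_exp_ofReal_mul_I _

lemma hasDerivAt_exp_I_mul (w : ℂ) (t : ℝ) :
    HasDerivAt (fun t : ℝ => Complex.exp (I * w * t)) (I * w * Complex.exp (I * w * t)) t := by
  have h1 : HasDerivAt (fun t : ℝ => I * w * (t : ℂ)) (I * w * 1) t :=
    (Complex.ofRealCLM.hasDerivAt (x := t)).const_mul (I * w)
  exact h1.cexp.congr_deriv (by ring)

/-- High-frequency approximation: for `μ = w² + i ν` with `|ν| ≤ S` the normalised solution is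
close to the free one on `[-s, s]`. -/
lemma IsRotatedAiryPair.norm_sub_sin_le {μ : ℂ} {y Y : ℝ → ℂ} (h : IsRotatedAiryPair μ y Y)
    {s S w : ℝ} (hs : 0 < s) (hsS : s ≤ S) (hw : 1 ≤ w) (hμ : μ.re = w ^ 2) (hν : |μ.im| ≤ S)
    (hl : y (-s) = 0) (hY : Y (-s) = 1) :
    ∀ t ∈ Set.Icc (-s) s,
      ‖w * y t - Real.sin (w * (t + s))‖ ≤ 4 * S ^ 2 * Real.exp (4 * S ^ 2) / w := by
  have hw0 : 0 < w := by linarith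
  have hS : 0 < S := hs.trans_le hsS
  set p : ℝ → ℂ := fun t => (Y t + I * w * y t) * Complex.exp (I * (-w : ℝ) * t) with hp
  set q : ℝ → ℂ := fun t => (Y t - I * w * y t) * Complex.exp (I * w * t) with hq
  have hμe : ∀ t : ℝ, μ + I * t = w ^ 2 + I * (μ.im + t : ℝ) := by
    intro t
    apply Complex.ext
    · simp [← Complex.ofReal_pow, hμ]
    · simp [← Complex.ofReal_pow]
  have hpd : ∀ t, HasDerivAt p (-(I * (μ.im + t : ℝ)) * y t *
      Complex.exp (I * (-w : ℝ) * t)) t := by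
    intro t
    have h1 := ((h.2 t).add ((h.1 t).const_mul (I * w))).mul
      (hasDerivAt_exp_I_mul ((-w : ℝ) : ℂ) t)
    refine h1.congr_deriv ?_
    simp only [Pi.add_apply]
    rw [hμe]
    push_cast
    linear_combination (-(w : ℂ) ^ 2 * y t * Complex.exp (I * -w * t)) * Complex.I_sq
  have hqd : ∀ t, HasDerivAt q (-(I * (μ.im + t : ℝ)) * y t * Complex.exp (I * w * t)) t := by
    intro t
    have h1 := ((h.2 t).sub ((h.1 t).const_mul (I * w))).mul
      (hasDerivAt_exp_I_mul (w : ℂ) t)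
    refine h1.congr_deriv ?_
    simp only [Pi.sub_apply]
    rw [hμe]
    push_cast
    linear_combination (-(w : ℂ) ^ 2 * y t * Complex.exp (I * w * t)) * Complex.I_sq
  have hee : ∀ t : ℝ, Complex.exp (I * (-w : ℝ) * t) * Complex.exp (I * w * t) = 1 := by
    intro t
    rw [← Complex.exp_add]
    push_cast
    rw [show I * -(w : ℂ) * t + I * w * t = 0 by ring, Complex.exp_zero]
  have hyt : ∀ t, 2 * I * (w * y t) =
      p t * Complex.exp (I * w * t) - q t * Complex.exp (I * (-w : ℝ) * t) := by
    intro t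
    simp only [hp, hq]
    linear_combination (-2 * I * w * y t) * hee t
  have hn1 : ∀ t : ℝ, ‖Complex.exp (I * w * t)‖ = 1 := fun t => norm_exp_I_mul_ofReal_mul w t
  have hn2 : ∀ t : ℝ, ‖Complex.exp (I * (-w : ℝ) * t)‖ = 1 :=
    fun t => norm_exp_I_mul_ofReal_mul (-w) t
  have hybound : ∀ t, w * ‖y t‖ ≤ ‖(p t, q t)‖ := by
    intro t
    have h1 : ‖2 * I * (w * y t)‖ = 2 * (w * ‖y t‖) := by
      simp [abs_of_pos hw0]
    have h2 := norm_sub_le (p t * Complex.exp (I * w * t)) (q t * Complex.exp (I * (-w : ℝ) * t))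
    rw [← hyt, h1, norm_mul (p t), norm_mul (q t), hn1, hn2, mul_one, mul_one] at h2
    have h3 : ‖p t‖ ≤ ‖(p t, q t)‖ := le_max_left _ _
    have h4 : ‖q t‖ ≤ ‖(p t, q t)‖ := le_max_right _ _
    linarith
  have hcoef : ∀ t ∈ Set.Icc (-s) s, ‖-(I * ((μ.im + t : ℝ) : ℂ))‖ ≤ 2 * S := by
    intro t ht
    rw [norm_neg, norm_mul, Complex.norm_I, one_mul, Complex.norm_real, Real.norm_eq_abs]
    have := abs_add_le μ.im t
    have : |t| ≤ s := abs_le.mpr ht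
    linarith
  have hp0 : p (-s) = Complex.exp (I * (-w : ℝ) * (-s : ℝ)) := by simp [hp, hl, hY]
  have hq0 : q (-s) = Complex.exp (I * w * (-s : ℝ)) := by simp [hq, hl, hY]
  have hder : ∀ t, HasDerivAt (fun t => (p t, q t)) (_, _) t := fun t => (hpd t).prodMk (hqd t)
  have hg := norm_le_gronwallBound_of_norm_deriv_right_le (δ := 1) (K := 2 * S) (ε := 0)
    (a := -s) (b := s)
    (fun t _ => (hder t).continuousAt.continuousWithinAt)
    (fun t _ => (hder t).hasDerivWithinAt)
    (by rw [Prod.norm_def, hp0, hq0, hn1, hn2]; simp) (fun t ht => by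
      have hyle : ‖y t‖ ≤ ‖(p t, q t)‖ :=
        (le_mul_of_one_le_left (norm_nonneg _) hw).trans (hybound t)
      rw [add_zero, Prod.norm_def]
      have hc := hcoef t ⟨ht.1, ht.2.le⟩
      refine max_le ?_ ?_
      · simp only [norm_mul _ (Complex.exp _), hn2, mul_one]
        rw [norm_mul]; gcongr
      · simp only [norm_mul _ (Complex.exp _), hn1, mul_one]
        rw [norm_mul]; gcongr)
  set K := Real.exp (4 * S ^ 2) with hK
  have hpq : ∀ t ∈ Set.Icc (-s) s, ‖(p t, q t)‖ ≤ K := by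
    intro t ht
    refine (hg t ht).trans ?_
    rw [gronwallBound_ε0, one_mul, hK]
    apply Real.exp_le_exp.mpr
    nlinarith [ht.2]
  have hyK : ∀ t ∈ Set.Icc (-s) s, ‖y t‖ ≤ K / w := by
    intro t ht
    rw [le_div_iff₀ hw0, mul_comm]
    exact (hybound t).trans (hpq t ht)
  have hbd : ∀ t ∈ Set.Icc (-s) s, ∀ e : ℂ, ‖e‖ = 1 →
      ‖-(I * ((μ.im + t : ℝ) : ℂ)) * y t * e‖ ≤ 2 * S * (K / w) := by
    intro t ht e he
    rw [norm_mul, he, mul_one, norm_mul]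
    have := hcoef t ht
    have := hyK t ht
    gcongr
  have hK0 : 0 < K := Real.exp_pos _
  have hfin : ∀ t ∈ Set.Icc (-s) s, 2 * S * (K / w) * (t - -s) ≤ 4 * S ^ 2 * K / w := by
    intro t ht
    have : 2 * S * (K / w) * (t - -s) ≤ 2 * S * (K / w) * (2 * S) := by
      gcongr
      linarith [ht.2]
    refine this.trans (le_of_eq ?_)
    ring
  intro t ht
  have hpt := (norm_image_sub_le_of_norm_deriv_le_segment'
    (fun t _ => (hpd t).hasDerivWithinAt)
    (fun t ht => hbd t ⟨ht.1, ht.2.le⟩ _ (hn2 t)) t ht).trans (hfin t ht)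
  have hqt := (norm_image_sub_le_of_norm_deriv_le_segment'
    (fun t _ => (hqd t).hasDerivWithinAt)
    (fun t ht => hbd t ⟨ht.1, ht.2.le⟩ _ (hn1 t)) t ht).trans (hfin t ht)
  have hsin : 2 * I * (Real.sin (w * (t + s)) : ℂ) =
      p (-s) * Complex.exp (I * w * t) - q (-s) * Complex.exp (I * (-w : ℝ) * t) := by
    rw [hp0, hq0, ← Complex.exp_add, ← Complex.exp_add, Complex.ofReal_sin, Complex.sin]
    have e1 : -(((w * (t + s) : ℝ)) : ℂ) * I = I * w * (-s : ℝ) + I * (-w : ℝ) * t := by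
      push_cast; ring
    have e2 : (((w * (t + s) : ℝ)) : ℂ) * I = I * (-w : ℝ) * (-s : ℝ) + I * w * t := by
      push_cast; ring
    rw [e1, e2]
    linear_combination (Complex.exp (I * w * (-s : ℝ) + I * (-w : ℝ) * t) -
      Complex.exp (I * (-w : ℝ) * (-s : ℝ) + I * w * t)) * Complex.I_sq
  have hdiff : 2 * I * (w * y t - Real.sin (w * (t + s))) =
      (p t - p (-s)) * Complex.exp (I * w * t) -
        (q t - q (-s)) * Complex.exp (I * (-w : ℝ) * t) := by
    rw [mul_sub, hyt, hsin]; ring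
  have hnorm := norm_sub_le ((p t - p (-s)) * Complex.exp (I * w * t))
    ((q t - q (-s)) * Complex.exp (I * (-w : ℝ) * t))
  rw [← hdiff, norm_mul, norm_mul (_ - _), norm_mul (_ - _), hn1, hn2] at hnorm
  simp only [norm_mul, Complex.norm_ofNat, Complex.norm_I, mul_one] at hnorm
  linarith

/-- Non-real spectral parameters of the Dirichlet problem on `[-s, s]` are bounded, locally
uniformly in `s`. -/
lemma IsRotatedAiryPair.re_le {μ : ℂ} {y Y : ℝ → ℂ} (h : IsRotatedAiryPair μ y Y)
    {s₁ s S L C : ℝ} (hs₁ : 0 < s₁) (hs₁s : s₁ ≤ s) (hsS : s ≤ S)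
    (hL : L = 4 * S ^ 2 * Real.exp (4 * S ^ 2)) (hC : C = L + 2 * S * ((2 + L) * L))
    (hl : y (-s) = 0) (hr : y s = 0) (hY : Y (-s) = 1) (hi : μ.im ≠ 0) :
    μ.re ≤ 1 + ((C / s₁) ^ 2 + L ^ 2) := by
  have hs : 0 < s := hs₁.trans_le hs₁s
  have hS : 0 < S := hs.trans_le hsS
  have hY0 : Y (-s) ≠ 0 := by rw [hY]; exact one_ne_zero
  have hre := h.re_pos hs hl hr hY0
  have him := (h.abs_im_le hs hl hr hY0).trans hsS
  have hL0 : 0 < L := by rw [hL]; positivity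
  set w := √μ.re with hw
  have hww : w ^ 2 = μ.re := Real.sq_sqrt hre.le
  have hw0 : 0 < w := Real.sqrt_pos.mpr hre
  rcases lt_or_ge w 1 with hw1 | hw1
  · have : 0 ≤ (C / s₁) ^ 2 + L ^ 2 := by positivity
    nlinarith
  have happ := h.norm_sub_sin_le hs hsS hw1 hww.symm him hl hY
  rw [← hL] at happ
  have hLw : L / w ≤ L := div_le_self hL0.le hw1
  have hsin : |Real.sin (w * (s + s))| ≤ L / w := by
    have := happ s ⟨by linarith, le_rfl⟩
    rwa [hr, mul_zero, zero_sub, norm_neg, Complex.norm_real, Real.norm_eq_abs] at this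
  set F : ℝ → ℂ := fun t => y t * -starRingEnd ℂ (Y (-t)) - Y t * starRingEnd ℂ (y (-t)) with hF
  have hFd : ∀ t, HasDerivAt F (2 * I * μ.im * (y t * starRingEnd ℂ (y (-t)))) t := by
    intro t
    have hy1 : HasDerivAt (fun t => starRingEnd ℂ (y (-t))) (-starRingEnd ℂ (Y (-t))) t := by
      have h1 := (h.1 (-t)).scomp t (hasDerivAt_neg t)
      have h2 := Complex.conjCLE.toContinuousLinearMap.hasFDerivAt.comp_hasDerivAt t h1
      exact h2.congr_deriv (by simp)
    have hy2 : HasDerivAt (fun t => starRingEnd ℂ (Y (-t)))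
        ((starRingEnd ℂ μ + I * t) * starRingEnd ℂ (y (-t))) t := by
      have h1 := (h.2 (-t)).scomp t (hasDerivAt_neg t)
      have h2 := Complex.conjCLE.toContinuousLinearMap.hasFDerivAt.comp_hasDerivAt t h1
      exact h2.congr_deriv (by simp; ring)
    refine (((h.1 t).mul hy2.neg).sub ((h.2 t).mul hy1)).congr_deriv ?_
    have hconj : starRingEnd ℂ μ = μ - 2 * I * μ.im := by
      apply Complex.ext <;> simp
      ring
    simp only [Pi.neg_apply]
    rw [hconj]
    ring
  have hFl : F (-s) = 0 := by simp [hF, hl, hr]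
  have hFr : F s = 0 := by simp [hF, hl, hr]
  set A : ℝ → ℂ := fun t => ((1 / 2 * (Real.sin (2 * w * t) / (2 * w) -
    t * Real.cos (2 * w * s)) : ℝ) : ℂ) with hA
  have hAd : ∀ t, HasDerivAt A
      ((Real.sin (w * (t + s)) * Real.sin (w * (-t + s)) : ℝ) : ℂ) t := by
    intro t
    have h1 : HasDerivAt (fun t => Real.sin (2 * w * t)) (Real.cos (2 * w * t) * (2 * w * 1)) t :=
      ((hasDerivAt_id t).const_mul (2 * w)).sin
    have h2 := ((h1.div_const (2 * w)).sub
      ((hasDerivAt_id t).mul_const (Real.cos (2 * w * s)))).const_mul (1 / 2)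
    refine (h2.congr_deriv ?_).ofReal_comp
    have e1 : 2 * w * t = w * (t + s) - w * (-t + s) := by ring
    have e2 : 2 * w * s = w * (t + s) + w * (-t + s) := by ring
    rw [mul_one, mul_div_cancel_right₀ _ (by positivity), e1, e2, Real.cos_sub, Real.cos_add]
    ring
  have hic : (2 * I * μ.im : ℂ) ≠ 0 := by simp [hi]
  set G : ℝ → ℂ := fun t => w ^ 2 / (2 * I * μ.im) * F t - A t with hG
  have hGd : ∀ t, HasDerivAt G ((w * y t) * starRingEnd ℂ (w * y (-t)) -
      Real.sin (w * (t + s)) * Real.sin (w * (-t + s))) t := by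
    intro t
    refine (((hFd t).const_mul ((w : ℂ) ^ 2 / (2 * I * μ.im))).sub (hAd t)).congr_deriv ?_
    rw [map_mul, Complex.conj_ofReal, Complex.ofReal_mul]
    congr 1
    rw [← mul_assoc, div_mul_cancel₀ _ hic]
    ring
  have hGb : ∀ t ∈ Set.Icc (-s) s, ‖(w * y t) * starRingEnd ℂ (w * y (-t)) -
      Real.sin (w * (t + s)) * Real.sin (w * (-t + s))‖ ≤ (2 + L) * L / w := by
    intro t ht
    have h1 := happ t ht
    have h2 := happ (-t) ⟨by linarith [ht.2], by linarith [ht.1]⟩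
    have h2' : ‖starRingEnd ℂ (w * y (-t)) - Real.sin (w * (-t + s))‖ ≤ L / w := by
      rwa [← Complex.norm_conj, map_sub, Complex.conj_conj, Complex.conj_ofReal]
    have h3 : ∀ x : ℝ, ‖(Real.sin x : ℂ)‖ ≤ 1 := fun x => by
      rw [Complex.norm_real]; exact Real.abs_sin_le_one x
    have h4 : ‖w * y t‖ ≤ 1 + L := by
      calc ‖w * y t‖ = ‖(w * y t - Real.sin (w * (t + s))) + Real.sin (w * (t + s))‖ := by
            congr 1; ring
        _ ≤ L / w + 1 := (norm_add_le _ _).trans (add_le_add h1 (h3 _))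
        _ ≤ _ := by linarith
    calc _ = ‖(w * y t) * (starRingEnd ℂ (w * y (-t)) - Real.sin (w * (-t + s))) +
          (w * y t - Real.sin (w * (t + s))) * Real.sin (w * (-t + s))‖ := by congr 1; ring
      _ ≤ (1 + L) * (L / w) + L / w * 1 := by
          refine (norm_add_le _ _).trans (add_le_add ?_ ?_)
          · rw [norm_mul]
            exact mul_le_mul h4 h2' (norm_nonneg _) (by positivity)
          · rw [norm_mul]
            exact mul_le_mul h1 (h3 _) (norm_nonneg _) (by positivity)
      _ = _ := by ring
  have hfin := norm_image_sub_le_of_norm_deriv_le_segment'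
    (fun t _ => (hGd t).hasDerivWithinAt) (fun t ht => hGb t ⟨ht.1, ht.2.le⟩) s
    ⟨by linarith, le_rfl⟩
  have hGG : G s - G (-s) = ((s * Real.cos (2 * w * s) - Real.sin (2 * w * s) / (2 * w) : ℝ) : ℂ) := by
    simp only [hG, hFl, hFr, hA]
    rw [mul_neg, Real.sin_neg]
    push_cast
    ring
  rw [hGG, Complex.norm_real, Real.norm_eq_abs] at hfin
  have e2 : w * (s + s) = 2 * w * s := by ring
  rw [e2] at hsin
  have hsin' : |Real.sin (2 * w * s) / (2 * w)| ≤ L / w := by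
    rw [abs_div, abs_of_pos (by positivity : 0 < 2 * w), div_le_div_iff₀ (by positivity) hw0]
    nlinarith [hsin.trans hLw]
  have hcos : |s * Real.cos (2 * w * s)| ≤ C / w := by
    have h1 := abs_sub_abs_le_abs_sub (s * Real.cos (2 * w * s)) (Real.sin (2 * w * s) / (2 * w))
    have h2 : (2 + L) * L / w * (s - -s) ≤ (2 + L) * L / w * (2 * S) := by
      gcongr; linarith
    have h3 : C / w = L / w + (2 + L) * L / w * (2 * S) := by rw [hC]; ring
    linarith
  have hcos' : |Real.cos (2 * w * s)| ≤ C / s₁ / w := by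
    rw [abs_mul, abs_of_pos hs] at hcos
    rw [div_right_comm, le_div_iff₀ hs₁]
    nlinarith [abs_nonneg (Real.cos (2 * w * s))]
  have hsq1 := pow_le_pow_left₀ (abs_nonneg _) hcos' 2
  have hsq2 := pow_le_pow_left₀ (abs_nonneg _) hsin 2
  rw [sq_abs] at hsq1 hsq2
  have hone := Real.sin_sq_add_cos_sq (2 * w * s)
  have : 1 ≤ ((C / s₁) ^ 2 + L ^ 2) / w ^ 2 := by
    rw [add_div, ← div_pow, ← div_pow]; linarith
  rw [le_div_iff₀ (by positivity)] at this
  linarith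

/-- `u` is an entire solution of the Airy equation with derivative `u₁`. -/
def IsAirySolution (u u₁ : ℂ → ℂ) : Prop :=
  (∀ z, HasDerivAt u (u₁ z) z) ∧ ∀ z, HasDerivAt u₁ (z * u z) z

lemma IsAirySolution.sub {u u₁ v v₁ : ℂ → ℂ} (hu : IsAirySolution u u₁)
    (hv : IsAirySolution v v₁) : IsAirySolution (fun z => u z - v z) fun z => u₁ z - v₁ z :=
  ⟨fun z => (hu.1 z).sub (hv.1 z), fun z => ((hu.2 z).sub (hv.2 z)).congr_deriv (by ring)⟩

lemma IsAirySolution.const_mul {u u₁ : ℂ → ℂ} (hu : IsAirySolution u u₁) (c : ℂ) :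
    IsAirySolution (fun z => c * u z) fun z => c * u₁ z :=
  ⟨fun z => (hu.1 z).const_mul c, fun z => ((hu.2 z).const_mul c).congr_deriv (by ring)⟩

lemma IsAirySolution.eq_zero {u u₁ : ℂ → ℂ} (hu : IsAirySolution u u₁) (h0 : u 0 = 0)
    (h1 : u₁ 0 = 0) (z : ℂ) : u z = 0 ∧ u₁ z = 0 := by
  have hline : ∀ t : ℝ, HasDerivAt (fun t : ℝ => (t : ℂ) * z) (1 * z) t := fun t =>
    (Complex.ofRealCLM.hasDerivAt (x := t)).mul_const z
  have hder : ∀ t : ℝ, HasDerivAt (fun t : ℝ => (u (t * z), u₁ (t * z)))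
      (u₁ (t * z) * (1 * z), (t * z * u (t * z)) * (1 * z)) t := fun t =>
    (HasDerivAt.comp t (hu.1 (t * z)) (hline t)).prodMk
      (HasDerivAt.comp t (hu.2 (t * z)) (hline t))
  have := eq_zero_of_abs_deriv_le_mul_abs_self_of_eq_zero_right (K := ‖z‖ + ‖z‖ ^ 2)
    (a := 0) (b := 1)
    (fun t _ => (hder t).continuousAt.continuousWithinAt)
    (fun t _ => (hder t).hasDerivWithinAt) (by simp [h0, h1]) (fun t ht => by
      have ha : ‖u (t * z)‖ ≤ ‖(u (t * z), u₁ (t * z))‖ := le_max_left _ _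
      have hb : ‖u₁ (t * z)‖ ≤ ‖(u (t * z), u₁ (t * z))‖ := le_max_right _ _
      have ht' : |t| ≤ 1 := abs_le.mpr ⟨by linarith [ht.1], ht.2.le⟩
      have hz := norm_nonneg z
      set N := ‖(u (t * z), u₁ (t * z))‖
      have hN : 0 ≤ N := (norm_nonneg _).trans ha
      rw [Prod.norm_def]
      refine max_le ?_ ?_
      · simp only [norm_mul, one_mul]
        nlinarith [mul_le_mul_of_nonneg_right hb hz, mul_nonneg (sq_nonneg ‖z‖) hN]
      · simp only [norm_mul, one_mul, Complex.norm_real, Real.norm_eq_abs]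
        calc |t| * ‖z‖ * ‖u (t * z)‖ * ‖z‖ ≤ 1 * ‖z‖ * N * ‖z‖ := by gcongr
          _ ≤ _ := by nlinarith [mul_nonneg hz hN]) 1 ⟨zero_le_one, le_rfl⟩
  simpa using this

lemma IsAirySolution.eq {u u₁ v v₁ : ℂ → ℂ} (hu : IsAirySolution u u₁)
    (hv : IsAirySolution v v₁) (h0 : u 0 = v 0) (h1 : u₁ 0 = v₁ 0) (z : ℂ) :
    u z = v z ∧ u₁ z = v₁ z := by
  have := (hu.sub hv).eq_zero (by simp [h0]) (by simp [h1]) z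
  exact ⟨sub_eq_zero.mp this.1, sub_eq_zero.mp this.2⟩

lemma IsAirySolution.conj_conj {u u₁ : ℂ → ℂ} (hu : IsAirySolution u u₁)
    (h0 : (u 0).im = 0) (h1 : (u₁ 0).im = 0) (z : ℂ) :
    u (starRingEnd ℂ z) = starRingEnd ℂ (u z) ∧ u₁ (starRingEnd ℂ z) = starRingEnd ℂ (u₁ z) := by
  have hs : IsAirySolution (fun z => starRingEnd ℂ (u (starRingEnd ℂ z)))
      fun z => starRingEnd ℂ (u₁ (starRingEnd ℂ z)) := by
    refine ⟨fun z => ?_, fun z => ?_⟩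
    · have := (hu.1 (starRingEnd ℂ z)).conj_conj
      simpa [Function.comp_def] using this
    · have := (hu.2 (starRingEnd ℂ z)).conj_conj
      simpa [Function.comp_def] using this
  have := hs.eq hu (by simpa using Complex.conj_eq_iff_im.mpr h0)
    (by simpa using Complex.conj_eq_iff_im.mpr h1) z
  exact ⟨by rw [← this.1, Complex.conj_conj], by rw [← this.2, Complex.conj_conj]⟩

lemma IsAirySolution.comp_mul {u u₁ : ℂ → ℂ} (hu : IsAirySolution u u₁) {ω : ℂ}
    (hω : ω ^ 3 = 1) : IsAirySolution (fun z => u (ω * z)) fun z => ω * u₁ (ω * z) := by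
  have hline : ∀ z, HasDerivAt (fun z => ω * z) (ω * 1) z := fun z =>
    (hasDerivAt_id z).const_mul ω
  refine ⟨fun z => ?_, fun z => ?_⟩
  · exact (HasDerivAt.comp z (hu.1 (ω * z)) (hline z)).congr_deriv (by ring)
  · refine ((HasDerivAt.comp z (hu.2 (ω * z)) (hline z)).const_mul ω).congr_deriv ?_
    linear_combination z * u (ω * z) * hω

lemma IsAirySolution.wronskian {u u₁ v v₁ : ℂ → ℂ} (hu : IsAirySolution u u₁)
    (hv : IsAirySolution v v₁) (z : ℂ) :
    u z * v₁ z - u₁ z * v z = u 0 * v₁ 0 - u₁ 0 * v 0 := by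
  have hd : ∀ z, HasDerivAt (fun z => u z * v₁ z - u₁ z * v z) 0 z := fun z =>
    (((hu.1 z).mul (hv.2 z)).sub ((hu.2 z).mul (hv.1 z))).congr_deriv (by ring)
  exact is_const_of_deriv_eq_zero (fun z => (hd z).differentiableAt) (fun z => (hd z).deriv) z 0

/-- The cross product `p(z + i s) q(z - i s) - p'(z - i s) q'(z + i s)`. -/
def crossProd (p q p' q' : ℂ → ℂ) (s : ℝ) (z : ℂ) : ℂ :=
  p (z + I * s) * q (z - I * s) - p' (z - I * s) * q' (z + I * s)

lemma continuous_crossProd {p q p' q' : ℂ → ℂ} (hp : Continuous p) (hq : Continuous q)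
    (hp' : Continuous p') (hq' : Continuous q') :
    Continuous (Function.uncurry (crossProd p q p' q')) := by
  simp only [Function.uncurry_def, crossProd]
  fun_prop

lemma hasDerivAt_crossProd {p q p' q' dp dq dp' dq' : ℂ → ℂ} (hp : ∀ z, HasDerivAt p (dp z) z)
    (hq : ∀ z, HasDerivAt q (dq z) z) (hp' : ∀ z, HasDerivAt p' (dp' z) z)
    (hq' : ∀ z, HasDerivAt q' (dq' z) z) (s : ℝ) (z : ℂ) :
    HasDerivAt (crossProd p q p' q' s) (dp (z + I * s) * q (z - I * s) +
      p (z + I * s) * dq (z - I * s) - (dp' (z - I * s) * q' (z + I * s) +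
      p' (z - I * s) * dq' (z + I * s))) z := by
  have ha : HasDerivAt (fun z : ℂ => z + I * s) 1 z := (hasDerivAt_id z).add_const _
  have hb : HasDerivAt (fun z : ℂ => z - I * s) 1 z := (hasDerivAt_id z).sub_const _
  have h := ((HasDerivAt.comp z (hp _) ha).mul (HasDerivAt.comp z (hq _) hb)).sub
    ((HasDerivAt.comp z (hp' _) hb).mul (HasDerivAt.comp z (hq' _) ha))
  exact h.congr_deriv (by simp only [Function.comp_def]; ring)

lemma hasDerivAt_crossProd_param {p q p' q' dp dq dp' dq' : ℂ → ℂ}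
    (hp : ∀ z, HasDerivAt p (dp z) z)
    (hq : ∀ z, HasDerivAt q (dq z) z) (hp' : ∀ z, HasDerivAt p' (dp' z) z)
    (hq' : ∀ z, HasDerivAt q' (dq' z) z) (z : ℂ) (s : ℝ) :
    HasDerivAt (fun t => crossProd p q p' q' t z) (I * (dp (z + I * s) * q (z - I * s) -
      p (z + I * s) * dq (z - I * s) + dp' (z - I * s) * q' (z + I * s) -
      p' (z - I * s) * dq' (z + I * s))) s := by
  have h0 : HasDerivAt (fun t : ℝ => I * (t : ℂ)) (I * 1) s :=
    (Complex.ofRealCLM.hasDerivAt (x := s)).const_mul I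
  have ha : HasDerivAt (fun t : ℝ => z + I * t) (I * 1) s := h0.const_add z
  have hb : HasDerivAt (fun t : ℝ => z - I * t) (-(I * 1)) s := h0.const_sub z
  have h := ((HasDerivAt.comp s (hp _) ha).mul (HasDerivAt.comp s (hq _) hb)).sub
    ((HasDerivAt.comp s (hp' _) hb).mul (HasDerivAt.comp s (hq' _) ha))
  exact h.congr_deriv (by simp only [Function.comp_def]; ring)

/-- `i (u(z + i s) v(z - i s) - u(z - i s) v(z + i s))`, the characteristic function. -/
def charFn (u v : ℂ → ℂ) (s : ℝ) (z : ℂ) : ℂ := I * crossProd u v u v s z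

/-- The derivative of `charFn` in `z`. -/
def charFnDeriv (u u₁ v v₁ : ℂ → ℂ) (s : ℝ) (z : ℂ) : ℂ :=
  I * (crossProd u₁ v u v₁ s z + crossProd u v₁ u₁ v s z)

/-- The second derivative of `charFn` in `z`. -/
def charFnDeriv2 (u u₁ v v₁ : ℂ → ℂ) (s : ℝ) (z : ℂ) : ℂ :=
  I * (2 * z * crossProd u v u v s z + 2 * crossProd u₁ v₁ u₁ v₁ s z)

/-- The derivative of `charFn` in the parameter `s`. -/
def charFnParamDeriv (u u₁ v v₁ : ℂ → ℂ) (s : ℝ) (z : ℂ) : ℂ :=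
  crossProd u v₁ u₁ v s z - crossProd u₁ v u v₁ s z

section
variable {u u₁ v v₁ : ℂ → ℂ}

lemma IsAirySolution.continuous (hu : IsAirySolution u u₁) : Continuous u :=
  continuous_iff_continuousAt.mpr fun z => (hu.1 z).continuousAt

lemma IsAirySolution.continuous_deriv (hu : IsAirySolution u u₁) : Continuous u₁ :=
  continuous_iff_continuousAt.mpr fun z => (hu.2 z).continuousAt

lemma hasDerivAt_charFn (hu : IsAirySolution u u₁) (hv : IsAirySolution v v₁) (s : ℝ) (z : ℂ) :
    HasDerivAt (charFn u v s) (charFnDeriv u u₁ v v₁ s z) z := by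
  refine ((hasDerivAt_crossProd hu.1 hv.1 hu.1 hv.1 s z).const_mul I).congr_deriv ?_
  simp only [charFnDeriv, crossProd]; ring

lemma hasDerivAt_charFnDeriv (hu : IsAirySolution u u₁) (hv : IsAirySolution v v₁)
    (s : ℝ) (z : ℂ) :
    HasDerivAt (charFnDeriv u u₁ v v₁ s) (charFnDeriv2 u u₁ v v₁ s z) z := by
  refine (((hasDerivAt_crossProd hu.2 hv.1 hu.1 hv.2 s z).add
    (hasDerivAt_crossProd hu.1 hv.2 hu.2 hv.1 s z)).const_mul I).congr_deriv ?_
  simp only [charFnDeriv2, crossProd]; ring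

lemma hasDerivAt_charFnDeriv2 (hu : IsAirySolution u u₁) (hv : IsAirySolution v v₁)
    (s : ℝ) (z : ℂ) :
    HasDerivAt (charFnDeriv2 u u₁ v v₁ s) (2 * charFn u v s z + 4 * z * charFnDeriv u u₁ v v₁ s z
      - 2 * s * charFnParamDeriv u u₁ v v₁ s z) z := by
  have h1 : HasDerivAt (fun z : ℂ => 2 * z) (2 * 1) z := (hasDerivAt_id z).const_mul 2
  refine (((h1.mul (hasDerivAt_crossProd hu.1 hv.1 hu.1 hv.1 s z)).add
    ((hasDerivAt_crossProd hu.2 hv.2 hu.2 hv.2 s z).const_mul 2)).const_mul I).congr_deriv ?_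
  simp only [charFn, charFnDeriv, charFnParamDeriv, crossProd]
  linear_combination (2 * s * (u (z + I * s) * v₁ (z - I * s) - u₁ (z - I * s) * v (z + I * s) -
    u₁ (z + I * s) * v (z - I * s) + u (z - I * s) * v₁ (z + I * s))) * Complex.I_sq

lemma hasDerivAt_charFn_param (hu : IsAirySolution u u₁) (hv : IsAirySolution v v₁)
    (z : ℂ) (s : ℝ) :
    HasDerivAt (fun t => charFn u v t z) (charFnParamDeriv u u₁ v v₁ s z) s := by
  refine ((hasDerivAt_crossProd_param hu.1 hv.1 hu.1 hv.1 z s).const_mul I).congr_deriv ?_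
  simp only [charFnParamDeriv, crossProd]
  linear_combination (u₁ (z + I * s) * v (z - I * s) - u (z - I * s) * v₁ (z + I * s) -
    u (z + I * s) * v₁ (z - I * s) + u₁ (z - I * s) * v (z + I * s)) * Complex.I_sq

lemma hasDerivAt_charFnParamDeriv (hu : IsAirySolution u u₁) (hv : IsAirySolution v v₁)
    (s : ℝ) (z : ℂ) :
    HasDerivAt (charFnParamDeriv u u₁ v v₁ s) (-2 * s * charFn u v s z) z := by
  refine ((hasDerivAt_crossProd hu.1 hv.2 hu.2 hv.1 s z).sub
    (hasDerivAt_crossProd hu.2 hv.1 hu.1 hv.2 s z)).congr_deriv ?_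
  simp only [charFn, crossProd]; ring

lemma iteratedDeriv_charFn (hu : IsAirySolution u u₁) (hv : IsAirySolution v v₁) (s : ℝ) :
    deriv (charFn u v s) = charFnDeriv u u₁ v v₁ s ∧
    iteratedDeriv 2 (charFn u v s) = charFnDeriv2 u u₁ v v₁ s ∧
    ∀ z, iteratedDeriv 3 (charFn u v s) z = 2 * charFn u v s z +
      4 * z * charFnDeriv u u₁ v v₁ s z - 2 * s * charFnParamDeriv u u₁ v v₁ s z := by
  have e1 : deriv (charFn u v s) = charFnDeriv u u₁ v v₁ s :=
    funext fun z => (hasDerivAt_charFn hu hv s z).deriv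
  have e2 : iteratedDeriv 2 (charFn u v s) = charFnDeriv2 u u₁ v v₁ s := by
    rw [iteratedDeriv_succ, iteratedDeriv_one, e1]
    exact funext fun z => (hasDerivAt_charFnDeriv hu hv s z).deriv
  refine ⟨e1, e2, fun z => ?_⟩
  rw [iteratedDeriv_succ, e2]
  exact (hasDerivAt_charFnDeriv2 hu hv s z).deriv

/-- Conjugation invariance, the reality condition on the functions used below. -/
def IsConjInvariant (p : ℂ → ℂ) : Prop := ∀ z, p (starRingEnd ℂ z) = starRingEnd ℂ (p z)

lemma crossProd_conj {p q p' q' : ℂ → ℂ} (hp : IsConjInvariant p) (hq : IsConjInvariant q)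
    (hp' : IsConjInvariant p') (hq' : IsConjInvariant q') (s : ℝ) (z : ℂ) :
    crossProd p q p' q' s (starRingEnd ℂ z) = -starRingEnd ℂ (crossProd p' q' p q s z) := by
  have ha : starRingEnd ℂ z + I * s = starRingEnd ℂ (z - I * s) := by simp
  have hb : starRingEnd ℂ z - I * s = starRingEnd ℂ (z + I * s) := by simp [sub_eq_add_neg]
  simp only [crossProd, ha, hb]
  rw [hp, hq, hp', hq']
  simp only [map_sub, map_mul]
  ring

lemma charFn_conj (cu : IsConjInvariant u) (cv : IsConjInvariant v) (s : ℝ) (z : ℂ) :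
    charFn u v s (starRingEnd ℂ z) = starRingEnd ℂ (charFn u v s z) := by
  simp only [charFn]
  rw [crossProd_conj cu cv cu cv, map_mul, Complex.conj_I]
  ring

lemma charFnDeriv2_real (cu : IsConjInvariant u) (cu₁ : IsConjInvariant u₁)
    (cv : IsConjInvariant v) (cv₁ : IsConjInvariant v₁) (s μ : ℝ) :
    ∃ k : ℝ, charFnDeriv2 u u₁ v v₁ s μ = k := by
  refine ⟨_, ((Complex.conj_eq_iff_re (z := charFnDeriv2 u u₁ v v₁ s μ)).mp ?_).symm⟩
  have h1 := crossProd_conj cu cv cu cv s μ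
  have h2 := crossProd_conj cu₁ cv₁ cu₁ cv₁ s μ
  rw [Complex.conj_ofReal] at h1 h2
  simp only [charFnDeriv2, map_mul, map_add, Complex.conj_I, Complex.conj_ofReal, map_ofNat]
  linear_combination (-2 * I * μ) * h1 - 2 * I * h2

lemma charFnParamDeriv_real (cu : IsConjInvariant u) (cu₁ : IsConjInvariant u₁)
    (cv : IsConjInvariant v) (cv₁ : IsConjInvariant v₁) (s μ : ℝ) :
    ∃ m : ℝ, charFnParamDeriv u u₁ v v₁ s μ = m := by
  refine ⟨_, ((Complex.conj_eq_iff_re (z := charFnParamDeriv u u₁ v v₁ s μ)).mp ?_).symm⟩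
  have h1 := crossProd_conj cu cv₁ cu₁ cv s μ
  have h2 := crossProd_conj cu₁ cv cu cv₁ s μ
  rw [Complex.conj_ofReal] at h1 h2
  simp only [charFnParamDeriv, map_sub]
  linear_combination h2 - h1
end

lemma IsRotatedAiryPair.const_mul {μ : ℂ} {y Y : ℝ → ℂ} (h : IsRotatedAiryPair μ y Y) (c : ℂ) :
    IsRotatedAiryPair μ (fun t => c * y t) fun t => c * Y t :=
  ⟨fun t => (h.1 t).const_mul c, fun t => ((h.2 t).const_mul c).congr_deriv (by ring)⟩

lemma IsAirySolution.isRotatedAiryPair {u u₁ : ℂ → ℂ} (hu : IsAirySolution u u₁) (z : ℂ) :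
    IsRotatedAiryPair z (fun t => u (z + I * t)) fun t => I * u₁ (z + I * t) := by
  have ha : ∀ t : ℝ, HasDerivAt (fun t : ℝ => z + I * t) (I * 1) t := fun t =>
    ((Complex.ofRealCLM.hasDerivAt (x := t)).const_mul I).const_add z
  refine ⟨fun t => ?_, fun t => ?_⟩
  · exact (HasDerivAt.comp t (hu.1 _) (ha t)).congr_deriv (by ring)
  · refine ((HasDerivAt.comp t (hu.2 _) (ha t)).const_mul I).congr_deriv ?_
    linear_combination (z + I * t) * u (z + I * t) * Complex.I_sq

lemma IsRotatedAiryPair.sub {μ : ℂ} {y Y x X : ℝ → ℂ} (h : IsRotatedAiryPair μ y Y)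
    (h' : IsRotatedAiryPair μ x X) : IsRotatedAiryPair μ (fun t => y t - x t) fun t => Y t - X t :=
  ⟨fun t => (h.1 t).sub (h'.1 t), fun t => ((h.2 t).sub (h'.2 t)).congr_deriv (by ring)⟩

section
variable {u u₁ v v₁ : ℂ → ℂ} {κ : ℂ}

/-- The solution vanishing at `-s` takes the value `charFn u v s z` at `s`. -/
lemma exists_isRotatedAiryPair_charFn (hu : IsAirySolution u u₁) (hv : IsAirySolution v v₁)
    (hκ : ∀ z, u z * v₁ z - u₁ z * v z = κ) (s : ℝ) (z : ℂ) :
    ∃ y Y : ℝ → ℂ, IsRotatedAiryPair z y Y ∧ y (-s) = 0 ∧ y s = charFn u v s z ∧ Y (-s) = κ := by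
  refine ⟨_, _, (((hu.isRotatedAiryPair z).const_mul (v (z - I * s))).sub
    ((hv.isRotatedAiryPair z).const_mul (u (z - I * s)))).const_mul I, ?_, ?_, ?_⟩
  · simp only [Complex.ofReal_neg, mul_neg, ← sub_eq_add_neg]
    ring
  · simp only [charFn, crossProd]
    ring
  · simp only [Complex.ofReal_neg, mul_neg, ← sub_eq_add_neg]
    rw [← hκ (z - I * s)]
    linear_combination (v (z - I * s) * u₁ (z - I * s) - u (z - I * s) * v₁ (z - I * s)) *
      Complex.I_sq

lemma re_pos_of_charFn_eq_zero (hu : IsAirySolution u u₁) (hv : IsAirySolution v v₁)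
    (hκ : ∀ z, u z * v₁ z - u₁ z * v z = κ) (h0 : κ ≠ 0) {s : ℝ} (hs : 0 < s) {z : ℂ}
    (hz : charFn u v s z = 0) : 0 < z.re := by
  obtain ⟨y, Y, h, hl, hr, hY⟩ := exists_isRotatedAiryPair_charFn hu hv hκ s z
  exact h.re_pos hs hl (hr.trans hz) (hY ▸ h0)

lemma norm_le_of_charFn_eq_zero (hu : IsAirySolution u u₁) (hv : IsAirySolution v v₁)
    (hκ : ∀ z, u z * v₁ z - u₁ z * v z = κ) (h0 : κ ≠ 0) {s₁ S : ℝ} (hs₁ : 0 < s₁) :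
    ∃ R, ∀ s ∈ Set.Icc s₁ S, ∀ z, charFn u v s z = 0 → z.im ≠ 0 → ‖z‖ ≤ R := by
  obtain ⟨L, hL⟩ : ∃ L, L = 4 * S ^ 2 * Real.exp (4 * S ^ 2) := ⟨_, rfl⟩
  obtain ⟨C, hC⟩ : ∃ C, C = L + 2 * S * ((2 + L) * L) := ⟨_, rfl⟩
  refine ⟨1 + ((C / s₁) ^ 2 + L ^ 2) + S, fun s hs z hz hi => ?_⟩
  have hs0 : 0 < s := hs₁.trans_le hs.1
  obtain ⟨y, Y, h, hl, hr, hY⟩ := exists_isRotatedAiryPair_charFn hu hv hκ s z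
  have h1 := (h.const_mul κ⁻¹).re_le hs₁ hs.1 hs.2 hL hC (by simp [hl]) (by simp [hr, hz])
    (by simp [hY, h0]) hi
  have h2 := h.abs_im_le hs0 hl (hr.trans hz) (hY ▸ h0)
  have h3 := re_pos_of_charFn_eq_zero hu hv hκ h0 hs0 hz
  calc ‖z‖ ≤ |z.re| + |z.im| := Complex.norm_le_abs_re_add_abs_im z
    _ ≤ _ := by rw [abs_of_pos h3]; linarith [hs.2]

lemma norm_charFn_le (hu : IsAirySolution u u₁) (hv : IsAirySolution v v₁)
    (hκ : ∀ z, u z * v₁ z - u₁ z * v z = κ) {s : ℝ} (hs : 0 < s) (z : ℂ) :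
    ‖charFn u v s z‖ ≤ Real.exp ((2 * s * (1 + √s) + ‖κ‖) * (1 + √‖z‖)) := by
  obtain ⟨y, Y, h, hl, hr, hY⟩ := exists_isRotatedAiryPair_charFn hu hv hκ s z
  rw [← hr]
  have h1 : ‖κ‖ ≤ Real.exp ‖κ‖ := by linarith [Real.add_one_le_exp ‖κ‖]
  calc ‖y s‖ ≤ ‖Y (-s)‖ * Real.exp (2 * s * (1 + √s + √‖z‖)) := h.norm_le_exp hs hl
    _ ≤ Real.exp ‖κ‖ * Real.exp (2 * s * (1 + √s + √‖z‖)) := by rw [hY]; gcongr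
    _ = Real.exp (‖κ‖ + 2 * s * (1 + √s + √‖z‖)) := (Real.exp_add _ _).symm
    _ ≤ _ := by
      refine Real.exp_le_exp.mpr ?_
      have a := Real.sqrt_nonneg s
      have b := Real.sqrt_nonneg ‖z‖
      have c := norm_nonneg κ
      nlinarith [mul_nonneg c b, mul_nonneg hs.le (mul_nonneg a b)]

/-- At a double zero the derivative in the parameter does not vanish. -/
lemma charFnParamDeriv_ne_zero (hκ : ∀ z, u z * v₁ z - u₁ z * v z = κ) (h0 : κ ≠ 0)
    {s : ℝ} {z : ℂ} (hz : charFn u v s z = 0) (hz' : charFnDeriv u u₁ v v₁ s z = 0) :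
    charFnParamDeriv u u₁ v v₁ s z ≠ 0 := by
  intro hm
  have e0 : crossProd u v u v s z = 0 := by simpa [charFn] using hz
  have e1 : crossProd u₁ v u v₁ s z + crossProd u v₁ u₁ v s z = 0 := by
    simpa [charFnDeriv] using hz'
  have e2 : crossProd u v₁ u₁ v s z = 0 := by
    simp only [charFnParamDeriv] at hm
    linear_combination (e1 + hm) / 2
  have hdet : crossProd u v u v s z * crossProd u₁ v₁ u₁ v₁ s z -
      crossProd u v₁ u₁ v s z * crossProd u₁ v u v₁ s z = κ ^ 2 := by
    simp only [crossProd]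
    linear_combination (u (z + I * s) * v₁ (z + I * s) - u₁ (z + I * s) * v (z + I * s)) *
      hκ (z - I * s) + κ * hκ (z + I * s)
  rw [e0, e2] at hdet
  exact h0 (by simpa using hdet.symm)

/-- A double real zero of the characteristic function at `s₁` forces non-real zeros for all larger
parameters. -/
lemma exists_nonreal_zero_charFn (hu : IsAirySolution u u₁) (hv : IsAirySolution v v₁)
    (hu0 : (u 0).im = 0) (hu1 : (u₁ 0).im = 0) (hv0 : (v 0).im = 0) (hv1 : (v₁ 0).im = 0)
    (hne : u 0 * v₁ 0 - u₁ 0 * v 0 ≠ 0) {s₁ S μ : ℝ} (hs₁ : 0 < s₁) (hS : s₁ < S)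
    (h0 : charFn u v s₁ μ = 0) (h1 : charFnDeriv u u₁ v v₁ s₁ μ = 0) :
    ∃ z : ℂ, z.im ≠ 0 ∧ charFn u v S z = 0 := by
  have cu : IsConjInvariant u := fun z => (hu.conj_conj hu0 hu1 z).1
  have cu₁ : IsConjInvariant u₁ := fun z => (hu.conj_conj hu0 hu1 z).2
  have cv : IsConjInvariant v := fun z => (hv.conj_conj hv0 hv1 z).1
  have cv₁ : IsConjInvariant v₁ := fun z => (hv.conj_conj hv0 hv1 z).2
  have hκ := hu.wronskian hv
  have h00 := continuous_crossProd hu.continuous hv.continuous hu.continuous hv.continuous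
  have h01 := continuous_crossProd hu.continuous hv.continuous_deriv hu.continuous_deriv
    hv.continuous
  have h10 := continuous_crossProd hu.continuous_deriv hv.continuous hu.continuous
    hv.continuous_deriv
  have h11 := continuous_crossProd hu.continuous_deriv hv.continuous_deriv hu.continuous_deriv
    hv.continuous_deriv
  refine exists_nonreal_zero_of_double_zero_sign (H := charFn u v) (H1 := charFnDeriv u u₁ v v₁)
    (H2 := charFnDeriv2 u u₁ v v₁) (M := charFnParamDeriv u u₁ v v₁)
    (continuous_const.mul h00) (continuous_const.mul (h10.add h01))
    (continuous_const.mul (((continuous_const.mul continuous_snd).mul h00).add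
      (continuous_const.mul h11))) (h01.sub h10)
    (hasDerivAt_charFn hu hv) (hasDerivAt_charFnDeriv hu hv) (hasDerivAt_charFn_param hu hv)
    (charFn_conj cu cv) (fun s hs => ⟨0, fun h => ?_⟩) (fun s hs hreal x hx hx1 => ?_) hs₁ hS
    (norm_le_of_charFn_eq_zero hu hv hκ hne hs₁) h0 h1
  · simpa using re_pos_of_charFn_eq_zero hu hv hκ hne hs h
  · obtain ⟨k, hk⟩ := charFnDeriv2_real cu cu₁ cv cv₁ s x
    obtain ⟨m₀, hm₀⟩ := charFnParamDeriv_real cu cu₁ cv cv₁ s x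
    obtain ⟨e1, e2, e3⟩ := iteratedDeriv_charFn hu hv s
    have hpos : 0 < x := by simpa using re_pos_of_charFn_eq_zero hu hv hκ hne hs hx
    refine ⟨k, m₀, hk, hm₀, double_zero_sign hpos
      (fun z => (hasDerivAt_charFn hu hv s z).differentiableAt) (by rw [e1]; exact e3)
      (hasDerivAt_charFnParamDeriv hu hv s) hreal (by positivity)
      (norm_charFn_le hu hv hκ hs) hs hx (by rw [e1]; exact hx1) (by rw [e2]; exact hk) hm₀ ?_⟩
    rintro rfl
    exact charFnParamDeriv_ne_zero hκ hne hx hx1 (by simpa using hm₀)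

/-- If `u` and `v₁` are invariant under the rotation by `ω`, a zero of `v` at `a` with
`ω a = conj a` gives a double real zero of the characteristic function. -/
lemma charFn_eq_zero_of_ray (hu : IsAirySolution u u₁) (hv : IsAirySolution v v₁)
    (hu1 : u₁ 0 = 0) (hv0 : v 0 = 0) {ω : ℂ} (hω : ω ^ 3 = 1) {s : ℝ} {z : ℂ}
    (hb : ω * (z + I * s) = z - I * s) (ha : v (z + I * s) = 0) :
    charFn u v s z = 0 ∧ charFnDeriv u u₁ v v₁ s z = 0 := by
  have hω0 : ω ≠ 0 := by rintro rfl; simp at hω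
  have e1 := (hu.comp_mul hω).eq hu (by simp) (by simp [hu1]) (z + I * s)
  have e2 := (hv.comp_mul hω).eq (hv.const_mul ω) (by simp [hv0]) (by simp) (z + I * s)
  simp only [hb] at e1 e2
  have e3 := mul_left_cancel₀ hω0 e2.2
  have e4 : v (z - I * s) = 0 := by rw [e2.1, ha, mul_zero]
  simp only [charFn, charFnDeriv, crossProd, e1.1, e3, e4, ha]
  constructor <;> ring
end

lemma IsAiry.isAirySolution {w : ℂ → ℂ} {a b : ℝ} (h : IsAiry w a b) :
    IsAirySolution w (deriv w) :=
  ⟨fun z => (h.1 z).hasDerivAt, fun z => (h.2.2.1 z) ▸ (h.2.1 z).hasDerivAt⟩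

lemma IsAirySolution.mul_add {u u₁ v v₁ : ℂ → ℂ} (hu : IsAirySolution u u₁)
    (hv : IsAirySolution v v₁) (c : ℂ) :
    IsAirySolution (fun z => c * u z + v z) fun z => c * u₁ z + v₁ z :=
  ⟨fun z => ((hu.1 z).const_mul c).add (hv.1 z),
    fun z => (((hu.2 z).const_mul c).add (hv.2 z)).congr_deriv (by ring)⟩

lemma sqrt_three_mul_rpow (a b : ℝ) (h : 1 / 2 + a = b) : √3 * (3 : ℝ) ^ a = 3 ^ b := by
  rw [Real.sqrt_eq_rpow, ← Real.rpow_add (by norm_num), h]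

/-- The values at the origin of `U₊`, `U₋` and their derivatives. -/
lemma uplus_uminus_zero {Ai Bi : ℂ → ℂ} (hAi : IsAiryAi Ai) (hBi : IsAiryBi Bi) :
    ∃ p q : ℝ, 0 < p ∧ 0 < q ∧ Uplus Ai Bi 0 = p ∧ (√3 : ℝ) * deriv Ai 0 + deriv Bi 0 = 0 ∧
      Uminus Ai Bi 0 = 0 ∧ -((√3 : ℝ) : ℂ) * deriv Ai 0 + deriv Bi 0 = q := by
  obtain ⟨-, -, -, hA0, hA1⟩ := hAi
  obtain ⟨-, -, -, hB0, hB1⟩ := hBi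
  have e0 : √3 * (3 : ℝ) ^ (-(2 : ℝ) / 3) = 3 ^ (-(1 : ℝ) / 6) :=
    sqrt_three_mul_rpow _ _ (by norm_num)
  have e1 : √3 * (3 : ℝ) ^ (-(1 : ℝ) / 3) = 3 ^ ((1 : ℝ) / 6) :=
    sqrt_three_mul_rpow _ _ (by norm_num)
  have hG : 0 < Real.Gamma (2 / 3) := Real.Gamma_pos_of_pos (by norm_num)
  have hG' : 0 < Real.Gamma (1 / 3) := Real.Gamma_pos_of_pos (by norm_num)
  refine ⟨2 * (3 ^ (-(1 : ℝ) / 6) / Real.Gamma (2 / 3)),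
    2 * (3 ^ ((1 : ℝ) / 6) / Real.Gamma (1 / 3)),
    by positivity, by positivity, ?_, ?_, ?_, ?_⟩ <;>
    simp only [Uplus, Uminus, hA0, hA1, hB0, hB1, ← e0, ← e1] <;> norm_cast <;> ring

lemma exp_pi_div_three : Complex.exp ((π / 3 : ℝ) * I) = 1 / 2 + I * (√3 / 2 : ℝ) := by
  rw [Complex.exp_mul_I, ← Complex.ofReal_cos, ← Complex.ofReal_sin, Real.cos_pi_div_three,
    Real.sin_pi_div_three]
  push_cast
  ring

lemma charFn_uplus_uminus (Ai Bi : ℂ → ℂ) (s : ℝ) (z : ℂ) :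
    charFn (Uplus Ai Bi) (Uminus Ai Bi) s z = 2 * I * (√3 : ℝ) * crossProd Ai Bi Ai Bi s z := by
  simp only [charFn, crossProd, Uplus, Uminus]
  ring

/-- For every `ε > ε₁ = (√3·α₁/2)³` (where `α₁` is the smallest modulus of a zero of `U₋`
on the ray `arg z = π/3`), the model operator `T(ε)` has at least one non-real eigenvalue. -/
theorem nonreal_eigenvalue_exists_after_first_collision (Ai Bi : ℂ → ℂ)
    (hAi : IsAiryAi Ai) (hBi : IsAiryBi Bi)
    (α₁ : ℝ) (hα₁ : IsLeast (rayZeroModuli (Uminus Ai Bi)) α₁)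
    (ε : ℝ) (hε : (Real.sqrt 3 * α₁ / 2) ^ 3 < ε) :
    ∃ lam : ℂ, lam.im ≠ 0 ∧ airyW Ai Bi ε lam = 0 := by
  have hA := IsAiry.isAirySolution hAi
  have hB := IsAiry.isAirySolution hBi
  obtain ⟨p, q, hp, hq, hV0, hV1, hU0, hU1⟩ := uplus_uminus_zero hAi hBi
  have hV : IsAirySolution (Uplus Ai Bi) fun z => (√3 : ℝ) * deriv Ai z + deriv Bi z :=
    hA.mul_add hB _
  have hU : IsAirySolution (Uminus Ai Bi) fun z => -((√3 : ℝ) : ℂ) * deriv Ai z + deriv Bi z :=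
    hA.mul_add hB _
  obtain ⟨hα, hzero⟩ := hα₁.1
  have h3 : ((√3 : ℝ) : ℂ) ^ 2 = 3 := by norm_cast; simp
  have hω : (-1 / 2 - I * (√3 / 2 : ℝ) : ℂ) ^ 3 = 1 := by
    push_cast
    linear_combination (-3 / 8 * (√3 : ℂ) ^ 2 - I / 8 * (√3 : ℂ) ^ 3) * Complex.I_sq +
      (3 / 8 + I / 8 * (√3 : ℂ)) * h3
  have ha : ((α₁ / 2 : ℝ) : ℂ) + I * (√3 * α₁ / 2 : ℝ) =
      α₁ * Complex.exp ((π / 3 : ℝ) * I) := by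
    rw [exp_pi_div_three]
    push_cast
    ring
  have hb : (-1 / 2 - I * (√3 / 2 : ℝ) : ℂ) * ((α₁ / 2 : ℝ) + I * (√3 * α₁ / 2 : ℝ)) =
      (α₁ / 2 : ℝ) - I * (√3 * α₁ / 2 : ℝ) := by
    push_cast
    linear_combination (-α₁ / 4 * (√3 : ℂ) ^ 2) * Complex.I_sq + (α₁ / 4 : ℂ) * h3
  have hs₁ : 0 < √3 * α₁ / 2 := by positivity
  obtain ⟨h0, h1⟩ := charFn_eq_zero_of_ray hV hU hV1 hU0 hω hb (by rw [ha]; exact hzero)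
  have hε0 : 0 < ε := (pow_pos hs₁ 3).trans hε
  have hS0 : 0 < ε ^ ((1 : ℝ) / 3) := Real.rpow_pos_of_pos hε0 _
  have hS : √3 * α₁ / 2 < ε ^ ((1 : ℝ) / 3) := by
    refine lt_of_pow_lt_pow_left₀ 3 hS0.le ?_
    rwa [← Real.rpow_natCast (ε ^ _), ← Real.rpow_mul hε0.le, show (1 : ℝ) / 3 * (3 : ℕ) = 1 by
      norm_num, Real.rpow_one]
  have hκ : Uplus Ai Bi 0 * (-((√3 : ℝ) : ℂ) * deriv Ai 0 + deriv Bi 0) -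
      ((√3 : ℝ) * deriv Ai 0 + deriv Bi 0) * Uminus Ai Bi 0 ≠ 0 := by
    rw [hV0, hU1, hU0, mul_zero, sub_zero]
    exact_mod_cast (mul_pos hp hq).ne'
  obtain ⟨z, hz, hz0⟩ := exists_nonreal_zero_charFn hV hU (by rw [hV0]; simp) (by simp [hV1])
    (by simp [hU0]) (by rw [hU1]; simp) hκ hs₁ hS h0 h1
  rw [charFn_uplus_uminus] at hz0
  have hz1 : crossProd Ai Bi Ai Bi (ε ^ ((1 : ℝ) / 3)) z = 0 := by simpa using hz0
  have hne : ((ε ^ ((1 : ℝ) / 3) : ℝ) : ℂ) ≠ 0 := by exact_mod_cast hS0.ne'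
  refine ⟨z / (ε ^ ((1 : ℝ) / 3) : ℝ), ?_, ?_⟩
  · rw [Complex.div_ofReal_im]
    exact div_ne_zero hz hS0.ne'
  · simpa only [airyW, mul_add, mul_sub, mul_div_cancel₀ z hne, crossProd, mul_comm I] using hz1
end
end

section
/- Every zero z of the Airy function Bi lying in the open first quadrant (Re z > 0, Im z > 0) satisfies arg z > π/3; equivalently, cot(arg z) < 1/√3 for every such zero. -/
open Complex MeasureTheory Real

noncomputable section

/-- Along the segment from `0` to `z`, the derivative of `Im (conj w · w')` for a solution `w`
of the Airy equation. -/
lemma IsAiry.hasDerivAt_im_conj_mul_deriv {w : ℂ → ℂ} {a b : ℝ} (h : IsAiry w a b) (z : ℂ)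
    (t : ℝ) :
    HasDerivAt (fun s : ℝ => (star (w (s * z)) * (z * deriv w (s * z))).im)
      (t * Complex.normSq (w (t * z)) * (z ^ 3).im) t := by
  obtain ⟨hw, hw', hode, -, -⟩ := h
  have hlin : HasDerivAt (fun s : ℂ => s * z) z (t : ℂ) := by
    simpa using (hasDerivAt_id (t : ℂ)).mul_const z
  have h1 : HasDerivAt (fun s : ℝ => w (s * z)) (deriv w (t * z) * z) t :=
    ((hw _).hasDerivAt.comp (t : ℂ) hlin).comp_ofReal
  have h2 : HasDerivAt (fun s : ℝ => deriv w (s * z)) (deriv (deriv w) (t * z) * z) t :=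
    ((hw' _).hasDerivAt.comp (t : ℂ) hlin).comp_ofReal
  have h3 := Complex.imCLM.hasFDerivAt.comp_hasDerivAt t (h1.star.mul (h2.const_mul z))
  refine h3.congr_deriv ?_
  rw [hode]
  simp only [Complex.imCLM_apply, Complex.normSq_apply, pow_succ, pow_zero, Complex.star_def,
    Complex.add_im, Complex.mul_im, Complex.mul_re, Complex.conj_re, Complex.conj_im,
    Complex.ofReal_re, Complex.ofReal_im, Complex.one_re, Complex.one_im]
  ring

/-- A real solution of the Airy equation whose value and slope at the origin have positive
product has no zero `z` with `0 < Im z` and `0 ≤ Im (z ^ 3)`; in particular it has none in the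
sector `0 < arg z ≤ π / 3`. -/
lemma IsAiry.ne_zero_of_im_pow_three_nonneg {w : ℂ → ℂ} {a b : ℝ} (h : IsAiry w a b)
    (hab : 0 < a * b) {z : ℂ} (him : 0 < z.im) (hz : 0 ≤ (z ^ 3).im) : w z ≠ 0 := by
  intro hwz
  have hmono := monotoneOn_of_hasDerivWithinAt_nonneg (convex_Icc (0 : ℝ) 1)
    (fun t _ => (h.hasDerivAt_im_conj_mul_deriv z t).continuousAt.continuousWithinAt)
    (fun t _ => (h.hasDerivAt_im_conj_mul_deriv z t).hasDerivWithinAt)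
    (fun t ht => by
      rw [interior_Icc] at ht
      exact mul_nonneg (mul_nonneg ht.1.le (Complex.normSq_nonneg _)) hz)
  have hle := hmono (Set.left_mem_Icc.2 zero_le_one) (Set.right_mem_Icc.2 zero_le_one) zero_le_one
  obtain ⟨-, -, -, h0, h0'⟩ := h
  simp [hwz, h0, h0'] at hle
  nlinarith [mul_pos hab him]

/-- Every zero of `Bi` in the open first quadrant satisfies `arg z > π/3`;
equivalently `cot(arg z) < 1/√3`. -/
theorem Bi_zero_first_quadrant_arg (Ai Bi : ℂ → ℂ)
    (hAi : IsAiryAi Ai) (hBi : IsAiryBi Bi)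
    (z : ℂ) (hz : Bi z = 0) (hre : 0 < z.re) (him : 0 < z.im) :
    π / 3 < z.arg ∧ Real.cos z.arg / Real.sin z.arg < 1 / Real.sqrt 3 := by
  have hsq : 3 * z.re ^ 2 < z.im ^ 2 := by
    by_contra! hle
    refine IsAiry.ne_zero_of_im_pow_three_nonneg hBi ?_ him ?_ hz
    · have h1 := Real.Gamma_pos_of_pos (show (0 : ℝ) < 1 / 3 by norm_num)
      have h2 := Real.Gamma_pos_of_pos (show (0 : ℝ) < 2 / 3 by norm_num)
      positivity
    · have him3 : (z ^ 3).im = z.im * (3 * z.re ^ 2 - z.im ^ 2) := by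
        simp only [pow_succ, pow_zero, Complex.mul_im, Complex.mul_re, Complex.one_re,
          Complex.one_im]
        ring
      rw [him3]
      exact mul_nonneg him.le (sub_nonneg.2 hle)
  have hz0 : z ≠ 0 := fun h => by simp [h] at him
  have hnorm : 0 < ‖z‖ := norm_pos_iff.2 hz0
  constructor
  · by_contra! hle
    have hcos := Real.cos_le_cos_of_nonneg_of_le_pi (Complex.arg_nonneg_iff.2 him.le)
      (by linarith [Real.pi_pos]) hle
    rw [Real.cos_pi_div_three, Complex.cos_arg hz0, le_div_iff₀ hnorm] at hcos
    have hnsq : ‖z‖ ^ 2 = z.re ^ 2 + z.im ^ 2 := by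
      rw [Complex.sq_norm, Complex.normSq_apply]
      ring
    nlinarith
  · rw [Complex.cos_arg hz0, Complex.sin_arg, div_div_div_cancel_right₀ hnorm.ne',
      div_lt_div_iff₀ him (by positivity), one_mul]
    refine lt_of_pow_lt_pow_left₀ 2 him.le ?_
    rw [mul_pow, Real.sq_sqrt (by norm_num)]
    linarith
end
end
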